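/- Forrester's conjecture holds for $n \le 5$: for nonnegative integers $a,b,k,n_0,n_1$ with $n = n_0+n_1 \le 5$, $\mathrm{CT}_x \prod_{i,j=n_0+1,\,i\ne j}^{n}(1-x_i/x_j)\, H(x_0,\ldots,x_n;a,b,k) = M_{n_0}(a,b,k)\prod_{j=0}^{n_1-1}\frac{(j+1)((k+1)j+a+b+kn_0)!\,(kj+k+j+kn_0)!}{k!\,((k+1)j+a+kn_0)!\,((k+1)j+b+kn_0)!}$. -/

import Mathlib

open MvPolynomial Finset

/-- The Forrester constant term
`CT_x ∏_{n₀+1 ≤ i ≠ j ≤ n₀+n₁}(1-x_i/x_j) · H(x_0,…,x_n;a,b,k)`, where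
`H(x_0,…,x_n;a,b,k) = ∏_{l=1}^n (1-x_l/x_0)^a (1-x_0/x_l)^b ∏_{1≤i≠j≤n}(1-x_i/x_j)^k`
and `n = n₀ + n₁`.  Clearing denominators, it is the coefficient of
`x_0^(n·a) ∏_{l≤n₀} x_l^(b+(n-1)k) ∏_{l>n₀} x_l^(b+(n-1)k+n₁-1)` in
`∏_{n₀<i≠j≤n}(x_j-x_i) · ∏_{l=1}^n (x_0-x_l)^a (x_l-x_0)^b · ∏_{1≤i≠j≤n}(x_j-x_i)^k`. -/
noncomputable def forresterCT (n₀ n₁ a b k : ℕ) : ℚ :=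
  MvPolynomial.coeff
    (Finsupp.equivFunOnFinite.symm
      (Fin.cons ((n₀ + n₁) * a)
        (fun l : Fin (n₀ + n₁) =>
          b + (n₀ + n₁ - 1) * k + (if n₀ ≤ (l : ℕ) then n₁ - 1 else 0))))
    ((∏ j ∈ Finset.univ.filter (fun l : Fin (n₀ + n₁) => n₀ ≤ (l : ℕ)),
        ∏ i ∈ (Finset.univ.filter (fun l : Fin (n₀ + n₁) => n₀ ≤ (l : ℕ))).erase j,
          (X j.succ - X i.succ : MvPolynomial (Fin (n₀ + n₁ + 1)) ℚ)) *
      (∏ l : Fin (n₀ + n₁),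
        (X (0 : Fin (n₀ + n₁ + 1)) - X l.succ : MvPolynomial (Fin (n₀ + n₁ + 1)) ℚ) ^ a *
          (X l.succ - X (0 : Fin (n₀ + n₁ + 1))) ^ b) *
      ∏ j : Fin (n₀ + n₁), ∏ i ∈ Finset.univ.erase j,
        (X j.succ - X i.succ : MvPolynomial (Fin (n₀ + n₁ + 1)) ℚ) ^ k)

/-- The right-hand side of Forrester's conjecture:
`M_{n₀}(a,b,k) ∏_{j=0}^{n₁-1} (j+1)((k+1)j+a+b+kn₀)!(kj+k+j+kn₀)! /
  (k!((k+1)j+a+kn₀)!((k+1)j+b+kn₀)!)`. -/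
noncomputable def forresterRHS (n₀ n₁ a b k : ℕ) : ℚ :=
  (∏ l ∈ Finset.range n₀,
      (((a + b + k * l).factorial * (k * (l + 1)).factorial : ℚ) /
        ((a + k * l).factorial * (b + k * l).factorial * k.factorial))) *
    ∏ j ∈ Finset.range n₁,
      (((j + 1) * ((k + 1) * j + a + b + k * n₀).factorial *
          (k * j + k + j + k * n₀).factorial : ℚ) /
        (k.factorial * ((k + 1) * j + a + k * n₀).factorial *
          ((k + 1) * j + b + k * n₀).factorial))

/-!
Put `x_0 = 1` and write `F` for the product of the factors `x_i - x_j`. The constant term with the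
factors `(1 - x_l) ^ a * (1 - x_l⁻¹) ^ b` is a linear functional of `F` which gives a monomial a
product of weights, one for each variable, that are polynomials in `a`. Hence, `F` being
homogeneous, the constant term is a polynomial in `a` of degree at most `n * b`.

At `a = -h`, each weight agrees with a polynomial of degree less than `h - b` in the exponent (with
`0` if `h ≤ b`), up to a correction supported on large exponents. Expand over the subsets `S` of
the variables carrying the polynomial part. The term of `S` vanishes if the corrections ask for
more degree outside `S` than `F` has, or if `F` vanishes to so high an order where `x_l = 1` for
all `l ∈ S` that it acts on the polynomials by difference operators killing them. For
`h = blockShift n₀ k l + r + 1`, `l < n`, `r < b`, every `S` falls under one of these two cases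
when `n₀ ≤ 1`, `n₁ ≤ 2` or `(n₀, n₁) = (2, 3)`. If `b ≤ k` these are `n * b` distinct roots, so
the constant term is determined by its value at `a = 0`, which is also its value at `a = b = 0`.
The latter is found by recursion: `x_1` may then play the role of `x_0`, so that
`forresterCT (n₀ + 1) n₁ 0 0 k = forresterCT n₀ n₁ k k k`, and the case `n₀ = 0` is the case
`n₁ = 0` with `k` replaced by `k + 1`.

To pass from `b ≤ k` to all `b`, fix `a` and `b` and let `k` vary. Both sides, divided by the
constant term of `∏_{i ≠ j} (1 - x_i / x_j) ^ k`, are rational functions of `k` without poles in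
`ℕ`, so they agree everywhere if they agree for large `k`. For Forrester's constant term this holds
because `x_i ∂/∂x_i` of `x ^ e * ∏_{i ≠ j} (1 - x_i / x_j) ^ k` has constant term `0`: these
relations reduce the constant term of the latter to those with smaller `∑ l, e_l ^ 2`.
-/

namespace Forrester

section Ideals

variable {A ι : Type*} [CommRing A]

theorem sup_pow_add_succ_le (I J : Ideal A) (m n : ℕ) :
    (I ⊔ J) ^ (m + n + 1) ≤ I ^ (m + 1) ⊔ J ^ (n + 1) := by
  rw [← Ideal.add_eq_sup, ← Ideal.add_eq_sup, add_pow, Ideal.sum_eq_sup]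
  refine Finset.sup_le fun i _ => Ideal.mul_le_left.trans ?_
  obtain hi | hi := lt_or_ge m i
  · exact Ideal.mul_le_left.trans ((Ideal.pow_le_pow_right hi).trans le_self_add)
  · exact Ideal.mul_le_right.trans ((Ideal.pow_le_pow_right (by lia)).trans le_add_self)

theorem span_image_pow_le_span_image_pow (f : ι → A) (S : Finset ι) {d D : ℕ}
    (hD : #S * d < D + #S) :
    Ideal.span (f '' S) ^ D ≤ Ideal.span ((fun i => f i ^ d) '' S) := by
  classical
  obtain rfl | ⟨m, rfl⟩ : d = 0 ∨ ∃ m, d = m + 1 := by cases d <;> simp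
  · obtain rfl | ⟨i, hi⟩ := S.eq_empty_or_nonempty
    · simp [Ideal.bot_pow (show D ≠ 0 by rintro rfl; simp at hD)]
    · have h1 : (1 : A) ∈ (fun j => f j ^ 0) '' (S : Set ι) := ⟨i, hi, pow_zero _⟩
      exact le_top.trans ((Ideal.eq_top_iff_one _).2 (Ideal.subset_span h1)).ge
  refine (Ideal.pow_le_pow_right (show #S * m + 1 ≤ D by lia)).trans ?_
  clear hD
  induction S using Finset.induction_on with
  | empty => simp
  | insert i S hi ih =>
    simp only [coe_insert, Set.image_insert_eq, Ideal.span_insert, card_insert_of_notMem hi,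
      ← Ideal.span_singleton_pow]
    rw [add_one_mul, add_comm (#S * m)]
    exact (sup_pow_add_succ_le _ _ _ _).trans (sup_le_sup le_rfl ih)

end Ideals

section MomentFunctional

variable {σ R : Type*} [CommRing R]

/-- The linear functional on polynomials sending the monomial `X ^ e` to `ψ e`. Constant terms of
`F * G` for a fixed Laurent polynomial `G` are functionals of this kind in `F`. -/
noncomputable def momentFunctional (ψ : (σ →₀ ℕ) → R) : MvPolynomial σ R →ₗ[R] R :=
  (basisMonomials σ R).constr R ψ

theorem momentFunctional_monomial (ψ : (σ →₀ ℕ) → R) (e : σ →₀ ℕ) (c : R) :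
    momentFunctional ψ (monomial e c) = c * ψ e := by
  have h : momentFunctional ψ (monomial e 1) = ψ e := by
    simpa [momentFunctional] using (basisMonomials σ R).constr_basis R ψ e
  rw [← mul_one c, ← smul_eq_mul, ← smul_monomial, map_smul, h, smul_eq_mul, smul_eq_mul, mul_one]

theorem momentFunctional_eq_sum (ψ : (σ →₀ ℕ) → R) (F : MvPolynomial σ R) :
    momentFunctional ψ F = ∑ e ∈ F.support, coeff e F * ψ e := by
  conv_lhs => rw [F.as_sum]
  simp only [map_sum, momentFunctional_monomial]

theorem momentFunctional_eq_zero {ψ : (σ →₀ ℕ) → R} {F : MvPolynomial σ R}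
    (h : ∀ e ∈ F.support, ψ e = 0) : momentFunctional ψ F = 0 := by
  rw [momentFunctional_eq_sum]
  exact sum_eq_zero fun e he => by rw [h e he, mul_zero]

theorem momentFunctional_sum {ι : Type*} (s : Finset ι) (ψ : ι → (σ →₀ ℕ) → R)
    (F : MvPolynomial σ R) :
    momentFunctional (fun e => ∑ i ∈ s, ψ i e) F = ∑ i ∈ s, momentFunctional (ψ i) F := by
  simp only [momentFunctional_eq_sum, mul_sum]
  exact sum_comm

theorem momentFunctional_X_sub_one_mul (ψ : (σ →₀ ℕ) → R) (i : σ) (F : MvPolynomial σ R) :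
    momentFunctional ψ ((X i - 1) * F) =
      momentFunctional (fwdDiff (Finsupp.single i 1) ψ) F := by
  induction F using MvPolynomial.induction_on' with
  | monomial e c =>
    rw [sub_mul, one_mul, X, monomial_mul, one_mul, map_sub]
    simp only [momentFunctional_monomial, fwdDiff]
    rw [add_comm e, mul_sub]
  | add F G hF hG => rw [mul_add, map_add, map_add, hF, hG]

theorem momentFunctional_X_sub_one_pow_mul (ψ : (σ →₀ ℕ) → R) (i : σ) (d : ℕ)
    (F : MvPolynomial σ R) :
    momentFunctional ψ ((X i - 1) ^ d * F) =
      momentFunctional ((fwdDiff (Finsupp.single i 1))^[d] ψ) F := by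
  induction d generalizing ψ with
  | zero => simp
  | succ d ih =>
    rw [pow_succ', mul_assoc, momentFunctional_X_sub_one_mul, ih, Function.iterate_succ_apply]

theorem fwdDiff_single_iterate_mul (i : σ) (p : ℕ → R) {τ : (σ →₀ ℕ) → R}
    (hτ : ∀ e, τ (e + Finsupp.single i 1) = τ e) (d : ℕ) :
    (fwdDiff (Finsupp.single i 1))^[d] (fun e => p (e i) * τ e) =
      fun e => (fwdDiff 1)^[d] p (e i) * τ e := by
  induction d generalizing p with
  | zero => rfl
  | succ d ih =>
    rw [Function.iterate_succ_apply, Function.iterate_succ_apply, ← ih]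
    congr 1
    funext e
    simp [fwdDiff, hτ, sub_mul]

-- `(fwdDiff 1)^[d] p = 0` says that `p` is a polynomial function of degree less than `d`.
theorem momentFunctional_prod_eq_zero_of_mem_span [Fintype σ] {S : Finset σ} {d : ℕ}
    {w : σ → ℕ → R} (hw : ∀ l ∈ S, (fwdDiff 1)^[d] (w l) = 0) {F : MvPolynomial σ R}
    (hF : F ∈ Ideal.span ((fun l => (X l - 1) ^ d) '' S)) :
    momentFunctional (fun e => ∏ l, w l (e l)) F = 0 := by
  classical
  suffices h : ∀ G, momentFunctional (fun e => ∏ l, w l (e l)) (F * G) = 0 by simpa using h 1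
  induction hF using Submodule.span_induction with
  | zero => simp
  | add F G _ _ hF hG => intro H; rw [add_mul, map_add, hF, hG, add_zero]
  | smul G F _ ih => intro H; rw [smul_eq_mul, mul_comm G, mul_assoc, ih]
  | mem F hF =>
    obtain ⟨i, hi, rfl⟩ := hF
    intro G
    simp only [← mul_prod_erase univ _ (mem_univ i)]
    rw [momentFunctional_X_sub_one_pow_mul,
      fwdDiff_single_iterate_mul i (w i) (fun e => ?_) d, hw i hi]
    · exact momentFunctional_eq_zero fun e _ => zero_mul _
    · exact prod_congr rfl fun l hl => by
        simp [Finsupp.single_eq_of_ne (ne_of_mem_erase hl)]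

end MomentFunctional

section DiffProd

variable {σ : Type*} (R : Type*) [CommRing R]

/-- The product `∏ (x_i - x_j) ^ κ (i, j)` over a set `T` of pairs of indices. -/
noncomputable def diffProd (κ : σ × σ → ℕ) (T : Finset (σ × σ)) : MvPolynomial σ R :=
  ∏ p ∈ T, (X p.1 - X p.2) ^ κ p

variable (κ : σ × σ → ℕ)

theorem diffProd_offDiag_mem_span_pow (S : Finset σ) :
    diffProd R κ S.offDiag ∈
      Ideal.span ((fun l => X l - 1) '' (S : Set σ)) ^ ∑ p ∈ S.offDiag, κ p := by
  rw [← prod_pow_eq_pow_sum]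
  refine Ideal.prod_mem_prod fun p hp => Ideal.pow_mem_pow ?_ _
  obtain ⟨h1, h2, -⟩ := mem_offDiag.1 hp
  rw [← sub_sub_sub_cancel_right _ _ 1]
  exact sub_mem (Ideal.subset_span ⟨_, h1, rfl⟩) (Ideal.subset_span ⟨_, h2, rfl⟩)

theorem isWeightedHomogeneous_diffProd_offDiag [DecidableEq σ] (S : Finset σ) :
    IsWeightedHomogeneous (fun l => if l ∈ S then 1 else 0) (diffProd R κ S.offDiag)
      (∑ p ∈ S.offDiag, κ p) := by
  refine IsWeightedHomogeneous.prod _ _ _ fun p hp => ?_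
  obtain ⟨h1, h2, -⟩ := mem_offDiag.1 hp
  have hX : ∀ l ∈ S, IsWeightedHomogeneous (fun l => if l ∈ S then 1 else 0)
      (X l : MvPolynomial σ R) 1 := fun l hl => by
    simpa [hl] using isWeightedHomogeneous_X R (fun l => if l ∈ S then 1 else 0) l
  simpa using ((hX _ h1).sub (hX _ h2)).pow (κ p)

variable {R κ}

theorem isHomogeneous_diffProd (T : Finset (σ × σ)) :
    (diffProd R κ T).IsHomogeneous (∑ p ∈ T, κ p) :=
  IsHomogeneous.prod _ _ _ fun p _ => by
    simpa using ((isHomogeneous_X R p.1).sub (isHomogeneous_X R p.2)).pow (κ p)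

theorem sum_eq_of_mem_support [Fintype σ] {n : ℕ} {F : MvPolynomial σ R} (hF : F.IsHomogeneous n)
    {e : σ →₀ ℕ} (he : e ∈ F.support) : ∑ l, e l = n := by
  rw [← Finsupp.degree_eq_sum, Finsupp.degree_eq_weight_one]
  exact hF (mem_support_iff.1 he)

variable [Fintype σ]

theorem sum_le_sum_of_mem_support_diffProd (S : Finset σ) {e : σ →₀ ℕ}
    (he : e ∈ (diffProd R κ univ.offDiag).support) :
    ∑ p ∈ S.offDiag, κ p ≤ ∑ l ∈ S, e l := by
  classical
  rw [diffProd, ← prod_sdiff (offDiag_mono (subset_univ S))] at he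
  obtain ⟨u, -, v, hv, rfl⟩ := mem_add.1 (support_mul _ _ he)
  have hv' := isWeightedHomogeneous_diffProd_offDiag R κ S (mem_support_iff.1 hv)
  rw [Finsupp.weight_apply, Finsupp.sum_fintype _ _ (by simp)] at hv'
  rw [← hv']
  simp only [smul_eq_mul, mul_ite, mul_one, mul_zero, sum_ite_mem, univ_inter]
  exact sum_le_sum fun l _ => Nat.le_add_left _ _

variable [DecidableEq σ]

/-- Expanding the product of the weights `p l + (w l - p l)` over subsets `S`, the part with
polynomial weights on `S` vanishes either because the remaining weights force too large a degree
in the variables outside `S`, or because the polynomial weights have too small a degree compared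
with the order of vanishing of the product along `x_l = 1`, `l ∈ S`. -/
theorem momentFunctional_diffProd_eq_zero {w p : σ → ℕ → R} {c : σ → ℤ} {d : ℕ}
    (hp : ∀ l, (fwdDiff 1)^[d] (p l) = 0) (hwp : ∀ l (e : ℕ), (e : ℤ) < c l → w l e = p l e)
    (hS : ∀ S : Finset σ, ∑ p ∈ univ.offDiag, κ p < ∑ p ∈ S.offDiag, κ p + ∑ l ∈ Sᶜ, c l ∨
      #S * d < ∑ p ∈ S.offDiag, κ p + #S) :
    momentFunctional (fun e => ∏ l, w l (e l)) (diffProd R κ univ.offDiag) = 0 := by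
  have hexp : ∀ e : σ →₀ ℕ, ∏ l, w l (e l) =
      ∑ S : Finset σ, (∏ l ∈ S, p l (e l)) * ∏ l ∈ Sᶜ, (w l - p l) (e l) := fun e => by
    rw [← Fintype.prod_add]
    simp
  simp only [hexp, momentFunctional_sum]
  refine sum_eq_zero fun S _ => ?_
  obtain h | h := hS S
  · refine momentFunctional_eq_zero fun e he => ?_
    obtain ⟨l, hl, hle⟩ : ∃ l ∈ Sᶜ, (e l : ℤ) < c l := by
      by_contra! hc
      have hSe := sum_le_sum_of_mem_support_diffProd S he
      have huniv := sum_eq_of_mem_support (isHomogeneous_diffProd _) he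
      have := sum_le_sum hc
      have := sum_add_sum_compl S e
      zify at *
      lia
    rw [prod_eq_zero hl (by simp [hwp l _ hle]), mul_zero]
  · have hmem : diffProd R κ univ.offDiag ∈ Ideal.span ((fun l => (X l - 1) ^ d) '' S) := by
      rw [diffProd, ← prod_sdiff (offDiag_mono (subset_univ S))]
      exact Ideal.mul_mem_left _ _
        (span_image_pow_le_span_image_pow _ S h (diffProd_offDiag_mem_span_pow R κ S))
    have hw : ∀ e : σ →₀ ℕ, (∏ l ∈ S, p l (e l)) * ∏ l ∈ Sᶜ, (w l - p l) (e l) =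
        ∏ l, S.piecewise p (w - p) l (e l) := fun e => by
      rw [← prod_mul_prod_compl S]
      exact congr_arg₂ _ (prod_congr rfl fun l hl => by rw [piecewise_eq_of_mem _ _ _ hl])
        (prod_congr rfl fun l hl => by rw [piecewise_eq_of_notMem _ _ _ (mem_compl.1 hl)]; rfl)
    simp only [hw]
    refine momentFunctional_prod_eq_zero_of_mem_span (fun l hl => ?_) hmem
    rw [piecewise_eq_of_mem _ _ _ hl, hp]

end DiffProd

section ExponentWeight

variable {R : Type*} [CommRing R] [BinomialRing R]

theorem multichoose_neg_natCast (c d : ℕ) :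
    Ring.multichoose (-c : R) d = (-1) ^ d * (c.choose d : R) := by
  rw [← Ring.choose_natCast, ← neg_neg (c : R), Ring.choose_neg, ← Ring.multichoose_eq]
  rcases Nat.even_or_odd d with hd | hd <;> simp [hd, Int.negOnePow_even, Int.negOnePow_odd]

theorem coeff_one_sub_X_pow (c d : ℕ) :
    ((1 - Polynomial.X : Polynomial R) ^ c).coeff d = Ring.multichoose (-c : R) d := by
  have h : (1 - Polynomial.X : Polynomial R) ^ c =
      ((1 + Polynomial.X : Polynomial R) ^ c).comp (Polynomial.C (-1) * Polynomial.X) := by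
    simp [sub_eq_add_neg]
  rw [h, Polynomial.comp_C_mul_X_coeff, Polynomial.coeff_one_add_X_pow, multichoose_neg_natCast,
    mul_comm]

theorem fwdDiff_iterate_succ_choose_sub (z : R) (q : ℕ) :
    (fwdDiff 1)^[q + 1] (fun e : ℕ => Ring.choose (z - e) q) = 0 := by
  induction q generalizing z with
  | zero => simp [← Pi.zero_def]
  | succ q ih =>
    have h : fwdDiff 1 (fun e : ℕ => Ring.choose (z - e) (q + 1)) =
        (-1 : R) • fun e : ℕ => Ring.choose (z - 1 - e) q := by
      funext e
      have := Ring.choose_succ_succ (z - 1 - e) q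
      rw [sub_right_comm, sub_add_cancel] at this
      simp only [fwdDiff, this, Pi.smul_apply, smul_eq_mul, Nat.cast_add_one, ← sub_sub,
        sub_right_comm z 1]
      ring
    rw [Function.iterate_succ_apply, h, fwdDiff_iter_const_smul, ih, smul_zero]

/-- The weight of `X ^ e` in the coefficient of `X ^ N` of `X ^ e * (1 - X) ^ (-x)`, for an
arbitrary exponent `-x`. -/
noncomputable def exponentWeight (x : R) (N e : ℕ) : R :=
  if e ≤ N then Ring.multichoose x (N - e) else 0

theorem exists_fwdDiff_eq_zero_and_exponentWeight_eq (m : ℤ) (N : ℕ) :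
    ∃ p : ℕ → R, (fwdDiff 1)^[m.toNat] p = 0 ∧
      ∀ e : ℕ, (e : ℤ) < N + m → exponentWeight (m : R) N e = p e := by
  obtain ⟨q, rfl | rfl⟩ : ∃ q : ℕ, m = -q ∨ m = q + 1 := by
    obtain hm | hm := le_or_gt m 0
    exacts [⟨(-m).toNat, .inl (by lia)⟩, ⟨(m - 1).toNat, .inr (by lia)⟩]
  · refine ⟨0, by simp, fun e he => ?_⟩
    rw [exponentWeight, if_pos (by lia), Int.cast_neg, Int.cast_natCast, multichoose_neg_natCast,
      Nat.choose_eq_zero_of_lt (by lia), Nat.cast_zero, mul_zero, Pi.zero_apply]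
  · refine ⟨fun e => Ring.choose ((N + q : ℕ) - e : R) q, ?_, fun e he => ?_⟩
    · exact fwdDiff_iterate_succ_choose_sub _ q
    · obtain ⟨t, ht⟩ : ∃ t, N + q = e + t := Nat.exists_eq_add_of_le (by lia)
      beta_reduce
      rw [ht, Nat.cast_add, add_sub_cancel_left, Ring.choose_natCast, exponentWeight]
      split_ifs with hle
      · have hx : (((q : ℤ) + 1 : ℤ) : R) + (N - e : ℕ) - 1 = t := by
          rw [← add_right_inj (e : R), ← Nat.cast_add e t, ← ht]
          push_cast [hle]
          ring
        rw [Ring.multichoose_eq, hx, Ring.choose_natCast,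
          Nat.choose_symm_of_eq_add (show t = N - e + q by lia)]
      · rw [Nat.choose_eq_zero_of_lt (by lia), Nat.cast_zero]

theorem exists_polynomial_eval_eq_exponentWeight (N e : ℕ) :
    ∃ p : Polynomial ℚ, p.natDegree ≤ N - e ∧ ∀ x, p.eval x = exponentWeight x N e := by
  obtain hle | hlt := le_or_gt e N
  · refine ⟨Polynomial.C ((N - e).factorial : ℚ)⁻¹ * ascPochhammer ℚ (N - e), ?_, fun x => ?_⟩
    · exact (Polynomial.natDegree_C_mul_le _ _).trans (ascPochhammer_natDegree _ _).le
    · have h := Ring.factorial_nsmul_multichoose_eq_ascPochhammer x (N - e)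
      rw [Polynomial.ascPochhammer_smeval_eq_eval, nsmul_eq_mul] at h
      rw [Polynomial.eval_C_mul, ← h, inv_mul_cancel_left₀ (by positivity), exponentWeight,
        if_pos hle]
  · exact ⟨0, by simp, fun x => by simp [exponentWeight, hlt.not_ge]⟩

end ExponentWeight

section CoeffMulProd

variable {σ R : Type*} [CommRing R] [Fintype σ]

theorem coeff_prod_aeval_X (q : σ → Polynomial R) (N : σ →₀ ℕ) :
    coeff N (∏ l, Polynomial.aeval (X l : MvPolynomial σ R) (q l)) = ∏ l, (q l).coeff (N l) := by
  classical
  have hterm : ∀ f : σ → ℕ, ∏ l, (q l).coeff (f l) • (X l : MvPolynomial σ R) ^ f l =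
      monomial (Finsupp.equivFunOnFinite.symm f) (∏ l, (q l).coeff (f l)) := fun f => by
    rw [monomial_eq, Finsupp.prod_fintype _ _ (by simp), map_prod, ← prod_mul_distrib]
    simp [smul_eq_C_mul]
  simp only [Polynomial.aeval_eq_sum_range, prod_univ_sum, hterm, coeff_sum, coeff_monomial,
    Equiv.symm_apply_eq, sum_ite_eq']
  refine ite_eq_left_iff.2 fun hN => ?_
  obtain ⟨l, hl⟩ : ∃ l, (q l).natDegree < N l := by simpa [Fintype.mem_piFinset] using hN
  rw [prod_eq_zero (mem_univ l) (Polynomial.coeff_eq_zero_of_natDegree_lt hl)]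

theorem coeff_mul_prod_aeval_X (q : σ → Polynomial R) (N : σ →₀ ℕ) (F : MvPolynomial σ R) :
    coeff N (F * ∏ l, Polynomial.aeval (X l : MvPolynomial σ R) (q l)) =
      momentFunctional (fun e => ∏ l, if e l ≤ N l then (q l).coeff (N l - e l) else 0) F := by
  induction F using MvPolynomial.induction_on' with
  | monomial e r =>
    rw [momentFunctional_monomial, coeff_monomial_mul', coeff_prod_aeval_X]
    split_ifs with h
    · simp [h _, Finsupp.tsub_apply]
    · obtain ⟨l, hl⟩ := not_forall.1 h
      rw [prod_eq_zero (mem_univ l) (if_neg hl), mul_zero]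
  | add F G hF hG => rw [add_mul, coeff_add, map_add, hF, hG]

end CoeffMulProd

section Interpolation

variable {K ι : Type*} [Field K]

theorem eval_mul_prod_sub_eq {P : Polynomial K} {s : Finset ι} {r : ι → K}
    (hr : Set.InjOn r s) (hP : ∀ i ∈ s, P.eval (r i) = 0) (hdeg : P.natDegree ≤ #s) (x y : K) :
    P.eval x * ∏ i ∈ s, (y - r i) = P.eval y * ∏ i ∈ s, (x - r i) := by
  obtain ⟨Q, rfl⟩ : ∏ i ∈ s, (Polynomial.X - Polynomial.C (r i)) ∣ P := by
    refine prod_dvd_of_coprime (fun i hi j hj hij => ?_) fun i hi =>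
      Polynomial.dvd_iff_isRoot.2 (hP i hi)
    exact Polynomial.isCoprime_X_sub_C_of_isUnit_sub
      (sub_ne_zero.2 fun h => hij (hr hi hj h)).isUnit
  obtain ⟨c, rfl⟩ : ∃ c, Q = Polynomial.C c := by
    obtain rfl | hQ := eq_or_ne Q 0
    · exact ⟨0, by simp⟩
    refine ⟨_, Polynomial.eq_C_of_natDegree_le_zero ?_⟩
    rw [(Polynomial.monic_prod_X_sub_C r s).natDegree_mul' hQ,
      Polynomial.natDegree_finsetProd_X_sub_C_eq_card] at hdeg
    lia
  simp only [Polynomial.eval_mul, Polynomial.eval_prod, Polynomial.eval_sub, Polynomial.eval_X,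
    Polynomial.eval_C]
  ring

end Interpolation

section ExponentPolynomial

variable {σ : Type*} [Fintype σ]

theorem coeff_mul_prod_one_sub_X_pow (c : ℕ) (N : σ →₀ ℕ) (F : MvPolynomial σ ℚ) :
    coeff N (F * ∏ l, (1 - X l) ^ c) =
      momentFunctional (fun e => ∏ l, exponentWeight (-c : ℚ) (N l) (e l)) F := by
  have h := coeff_mul_prod_aeval_X (fun _ => (1 - Polynomial.X : Polynomial ℚ) ^ c) N F
  simp only [map_pow, map_sub, map_one, Polynomial.aeval_X, coeff_one_sub_X_pow] at h
  exact h

theorem exists_polynomial_eval_eq_momentFunctional {D : ℕ} {F : MvPolynomial σ ℚ}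
    (hF : F.IsHomogeneous D) (N : σ → ℕ) :
    ∃ P : Polynomial ℚ, P.natDegree ≤ ∑ l, N l - D ∧
      ∀ x, P.eval x = momentFunctional (fun e => ∏ l, exponentWeight x (N l) (e l)) F := by
  choose p hdeg heval using exists_polynomial_eval_eq_exponentWeight
  refine ⟨∑ e ∈ F.support, Polynomial.C (coeff e F) * ∏ l, p (N l) (e l), ?_, fun x => ?_⟩
  · refine Polynomial.natDegree_sum_le_of_forall_le _ _ fun e he =>
      (Polynomial.natDegree_C_mul_le _ _).trans ?_
    by_cases hle : ∀ l, e l ≤ N l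
    · rw [← sum_eq_of_mem_support hF he, ← sum_tsub_distrib _ fun l _ => hle l]
      exact (Polynomial.natDegree_prod_le _ _).trans (sum_le_sum fun l _ => hdeg _ _)
    · push Not at hle
      obtain ⟨l, hl⟩ := hle
      have h0 : p (N l) (e l) = 0 := Polynomial.funext fun x => by
        rw [heval, exponentWeight, if_neg hl.not_ge, Polynomial.eval_zero]
      rw [prod_eq_zero (mem_univ l) h0, Polynomial.natDegree_zero]
      exact zero_le
  · simp [momentFunctional_eq_sum, Polynomial.eval_finsetSum, Polynomial.eval_prod, heval]

theorem coeff_add_mul_prod_X_sub_one_pow {R : Type*} [CommRing R] {F : MvPolynomial σ R}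
    {N : σ →₀ ℕ} (hF : F.IsHomogeneous (∑ l, N l)) (M : σ →₀ ℕ) :
    coeff (N + M) (F * ∏ l, (X l - 1) ^ M l) = coeff N F := by
  have hq : ∀ l, (X l - 1 : MvPolynomial σ R) ^ M l =
      Polynomial.aeval (X l) ((Polynomial.X + Polynomial.C (-1) : Polynomial R) ^ M l) := by
    simp [sub_eq_add_neg]
  simp only [hq, coeff_mul_prod_aeval_X, Polynomial.coeff_X_add_C_pow]
  rw [momentFunctional_eq_sum, sum_eq_single N _ fun h => by simp [notMem_support_iff.1 h]]
  · simp
  · intro e he hne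
    obtain ⟨l, hl⟩ : ∃ l, e l < N l := by
      by_contra! hle
      refine hne (Finsupp.ext fun l => ?_)
      exact ((sum_eq_sum_iff_of_le fun l _ => hle l).1 (sum_eq_of_mem_support hF he).symm l
        (mem_univ l)).symm
    have hlt : M l < (N + M) l - e l := by rw [Finsupp.add_apply]; lia
    rw [prod_eq_zero (mem_univ l) (by rw [Nat.choose_eq_zero_of_lt hlt]; simp), mul_zero]

end ExponentPolynomial

section ConstantTerm

variable {σ : Type*} [DecidableEq σ]

@[to_additive]
theorem prod_offDiag_eq_prod_prod_erase {M : Type*} [CommMonoid M] (S : Finset σ)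
    (f : σ × σ → M) : ∏ p ∈ S.offDiag, f p = ∏ l ∈ S, ∏ j ∈ S.erase l, f (l, j) :=
  prod_finset_product _ _ _ fun p => by simp [and_comm, ne_comm]

variable [Fintype σ] (κ : σ × σ → ℕ)

/-- The exponents of the monomial that clears denominators in
`∏ l, (1 - x_l⁻¹) ^ b * ∏ (l, j), (1 - x_j / x_l) ^ κ (l, j)`. -/
noncomputable def centralExponent (b : ℕ) : σ →₀ ℕ :=
  Finsupp.equivFunOnFinite.symm fun l => b + ∑ j ∈ univ.erase l, κ (l, j)

/-- The constant term of the Laurent polynomial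
`∏ l, (1 - x_l) ^ a * (1 - x_l⁻¹) ^ b * ∏ (l, j), (1 - x_j / x_l) ^ κ (l, j)`,
where `(l, j)` runs over the pairs of distinct indices. -/
noncomputable def constantTerm (a b : ℕ) : ℚ :=
  coeff (centralExponent κ b)
    (diffProd ℚ κ univ.offDiag * ∏ l, ((1 - X l) ^ a * (X l - 1) ^ b))

@[simp]
theorem centralExponent_apply (b : ℕ) (l : σ) :
    centralExponent κ b l = b + ∑ j ∈ univ.erase l, κ (l, j) := rfl

theorem sum_compl_centralExponent (S : Finset σ) (b : ℕ) :
    ∑ l ∈ Sᶜ, centralExponent κ b l + ∑ p ∈ S.offDiag, κ p + ∑ l ∈ S, ∑ j ∈ Sᶜ, κ (l, j) =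
      #Sᶜ * b + ∑ p ∈ univ.offDiag, κ p := by
  have hS : ∑ l ∈ S, ∑ j ∈ univ.erase l, κ (l, j) =
      ∑ l ∈ S, (∑ j ∈ S.erase l, κ (l, j) + ∑ j ∈ Sᶜ, κ (l, j)) :=
    sum_congr rfl fun l hl => by
      have hdisj : Disjoint (S.erase l) Sᶜ := disjoint_compl_right.mono_left (erase_subset l S)
      rw [← sum_union hdisj]
      exact sum_congr (by ext j; by_cases hj : j = l <;> by_cases j ∈ S <;> simp_all) fun _ _ => rfl
  simp only [centralExponent_apply, sum_offDiag_eq_sum_sum_erase, sum_add_distrib, sum_const,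
    smul_eq_mul, ← sum_add_sum_compl S fun l => ∑ j ∈ univ.erase l, κ (l, j), hS]
  ring

theorem sum_centralExponent (b : ℕ) :
    ∑ l, centralExponent κ b l = Fintype.card σ * b + ∑ p ∈ univ.offDiag, κ p := by
  simpa using sum_compl_centralExponent κ ∅ b

theorem constantTerm_zero_left (b : ℕ) : constantTerm κ 0 b = constantTerm κ 0 0 := by
  have hN : centralExponent κ b =
      centralExponent κ 0 + Finsupp.equivFunOnFinite.symm fun _ => b := by
    ext l
    simp [add_comm]
  have hF : (diffProd ℚ κ univ.offDiag).IsHomogeneous (∑ l, centralExponent κ 0 l) := by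
    rw [sum_centralExponent, mul_zero, zero_add]
    exact isHomogeneous_diffProd univ.offDiag
  have h := coeff_add_mul_prod_X_sub_one_pow hF (Finsupp.equivFunOnFinite.symm fun _ => b)
  simpa [constantTerm, hN] using h

theorem constantTerm_eq_momentFunctional (a b : ℕ) :
    constantTerm κ a b = (-1) ^ (Fintype.card σ * b) * momentFunctional
      (fun e => ∏ l, exponentWeight (-(a + b : ℕ) : ℚ) (centralExponent κ b l) (e l))
      (diffProd ℚ κ univ.offDiag) := by
  have hl : ∀ l : σ, (1 - X l : MvPolynomial σ ℚ) ^ a * (X l - 1) ^ b =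
      C ((-1) ^ b) * (1 - X l) ^ (a + b) := fun l => by
    rw [← neg_sub (1 : MvPolynomial σ ℚ), neg_pow, pow_add]
    simp only [map_pow, map_neg, map_one]
    ring
  simp only [constantTerm, hl, prod_mul_distrib, prod_const, card_univ, ← map_pow]
  rw [mul_left_comm, coeff_C_mul, coeff_mul_prod_one_sub_X_pow, ← pow_mul, mul_comm b]

/-- By homogeneity the constant term is a polynomial in `a`. Its values at negative integers are
coefficients of power series, to which `momentFunctional_diffProd_eq_zero` applies. -/
theorem exists_polynomial_eval_eq_constantTerm (b : ℕ) :
    ∃ P : Polynomial ℚ, P.natDegree ≤ Fintype.card σ * b ∧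
      (∀ a : ℕ, P.eval (a : ℚ) = constantTerm κ a b) ∧
      ∀ h : ℕ, (∀ S : Finset σ, ∑ l ∈ S, ∑ j ∈ Sᶜ, κ (l, j) < #Sᶜ * h ∨
        #S * (h - b) < ∑ p ∈ S.offDiag, κ p + #S) → P.eval (-h : ℚ) = 0 := by
  obtain ⟨Q, hdeg, hQ⟩ := exists_polynomial_eval_eq_momentFunctional
    (isHomogeneous_diffProd (R := ℚ) (κ := κ) univ.offDiag) (centralExponent κ b)
  rw [sum_centralExponent, Nat.add_sub_cancel] at hdeg
  refine ⟨Polynomial.C ((-1) ^ (Fintype.card σ * b)) *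
    Q.comp (-(Polynomial.X + Polynomial.C (b : ℚ))), ?_, fun a => ?_, fun h hS => ?_⟩
  · refine (Polynomial.natDegree_C_mul_le _ _).trans (Polynomial.natDegree_comp_le.trans ?_)
    rwa [Polynomial.natDegree_neg, Polynomial.natDegree_X_add_C, mul_one]
  · rw [constantTerm_eq_momentFunctional, ← hQ]
    simp
  · choose p hp hwp using exists_fwdDiff_eq_zero_and_exponentWeight_eq (R := ℚ) (h - b)
    have hx : (-(-(h : ℚ) + b)) = ((h - b : ℤ) : ℚ) := by push_cast; ring
    simp only [Polynomial.eval_mul, Polynomial.eval_comp, Polynomial.eval_neg,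
      Polynomial.eval_add, Polynomial.eval_X, Polynomial.eval_C, hx, hQ]
    rw [momentFunctional_diffProd_eq_zero (fun l => hp (centralExponent κ b l))
      (fun l => hwp (centralExponent κ b l)) fun S => ?_, mul_zero]
    refine (hS S).imp (fun hlt => ?_) fun hlt => ?_
    · have := sum_compl_centralExponent κ S b
      simp only [sum_add_distrib, sum_const, nsmul_eq_mul, Nat.cast_sum]
      zify at this hlt
      linarith
    · rwa [show ((h : ℤ) - b).toNat = h - b by lia]

end ConstantTerm

section BlockExponent

variable {σ : Type*} [DecidableEq σ] (B : Finset σ) (k : ℕ)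

/-- The exponents in Forrester's product: pairs inside the block `B` have exponent `k + 1`, all
others `k`. -/
def blockExponent (p : σ × σ) : ℕ := k + if p.1 ∈ B ∧ p.2 ∈ B then 1 else 0

theorem sum_sum_blockExponent (S T : Finset σ) :
    ∑ l ∈ S, ∑ j ∈ T, blockExponent B k (l, j) = #S * #T * k + #(S ∩ B) * #(T ∩ B) := by
  have h : ∀ l j, blockExponent B k (l, j) =
      k + (if l ∈ B then 1 else 0) * if j ∈ B then 1 else 0 := fun l j =>
    by by_cases l ∈ B <;> by_cases j ∈ B <;> simp [blockExponent, *]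
  simp only [h, sum_add_distrib, ← mul_sum, ← sum_mul, sum_const, smul_eq_mul, sum_boole,
    filter_mem_eq_inter, Nat.cast_id]
  ring

theorem sum_offDiag_blockExponent (S : Finset σ) :
    ∑ p ∈ S.offDiag, blockExponent B k p = #S * (#S - 1) * k + #(S ∩ B) * (#(S ∩ B) - 1) := by
  have h : S.offDiag.filter (fun p => p.1 ∈ B ∧ p.2 ∈ B) = (S ∩ B).offDiag := by
    ext p
    simp only [mem_filter, mem_offDiag, mem_inter]
    tauto
  simp only [blockExponent, sum_add_distrib, sum_const, smul_eq_mul, sum_boole, h, offDiag_card,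
    Nat.cast_id, Nat.mul_sub_one]

end BlockExponent

section Roots

/-- The sizes `n₀` and `n₁` of the complement of the block and of the block for which the
constant term, as a polynomial in `a`, has as many known roots as its degree. -/
def IsAdmissible (n₀ n₁ : ℕ) : Prop := n₀ ≤ 1 ∨ n₁ ≤ 2 ∨ n₀ = 2 ∧ n₁ = 3

/-- For `l < n₀ + n₁` and `r < b`, the constant term as a polynomial in `a` vanishes at
`-(blockShift n₀ k l + r + 1)`. -/
def blockShift (n₀ k l : ℕ) : ℕ := k * l + (l - n₀)

theorem blockShift_add_le_blockShift (n₀ k : ℕ) {l m : ℕ} (h : l < m) :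
    blockShift n₀ k l + k ≤ blockShift n₀ k m := by
  have := Nat.mul_le_mul_left k h
  simp only [blockShift]
  lia

theorem injOn_blockShift_add (n₀ : ℕ) {b k : ℕ} (hb : b ≤ k) (s : Finset ℕ) :
    Set.InjOn (fun p : ℕ × ℕ => blockShift n₀ k p.1 + p.2) (s ×ˢ range b : Finset (ℕ × ℕ)) := by
  rintro ⟨l, r⟩ hlr ⟨l', r'⟩ hlr' heq
  simp only [coe_product, coe_range, Set.mem_prod, Set.mem_Iio] at hlr hlr' heq
  obtain h | rfl | h := lt_trichotomy l l'
  · have := blockShift_add_le_blockShift n₀ k h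
    lia
  · simpa using heq
  · have := blockShift_add_le_blockShift n₀ k h
    lia

variable {s₀ s₁ t₀ t₁ : ℕ}

theorem IsAdmissible.mul_lt_mul (h : IsAdmissible (s₀ + t₀) (s₁ + t₁)) (ht : 0 < t₀ + t₁) :
    t₁ * s₁ < (t₀ + t₁) * (s₁ - t₀ + 1) := by
  obtain h | h | h := h
  · obtain rfl | rfl : t₀ = 0 ∨ t₀ = 1 := by lia
    · simp only [zero_add, tsub_zero] at *
      nlinarith
    · obtain rfl | hs := Nat.eq_zero_or_pos s₁
      · simp
      · rw [Nat.sub_add_cancel hs]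
        nlinarith
  · obtain ⟨rfl, rfl⟩ | hs : t₁ = 1 ∧ s₁ = 1 ∨ t₁ * s₁ = 0 := by
      have : t₁ ≤ 2 := by lia
      interval_cases t₁ <;> lia
    · obtain rfl | ht₀ := Nat.eq_zero_or_pos t₀
      · norm_num
      · nlinarith
    · rw [hs]
      positivity
  · have : t₀ ≤ 2 := by lia
    have : t₁ ≤ 3 := by lia
    interval_cases t₀ <;> interval_cases t₁ <;> lia

theorem IsAdmissible.mul_lt_add (h : IsAdmissible (s₀ + t₀) (s₁ + t₁)) (hs : 0 < s₀ + s₁) :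
    (s₀ + s₁) * (s₁ - t₀ - 1) < s₁ * (s₁ - 1) + (s₀ + s₁) := by
  obtain h | h | h := h
  · obtain rfl | rfl : s₀ = 0 ∨ s₀ = 1 := by lia
    · have : s₁ * (s₁ - t₀ - 1) ≤ s₁ * (s₁ - 1) := by gcongr; lia
      lia
    · obtain rfl : t₀ = 0 := by lia
      obtain rfl | hs₁ := Nat.eq_zero_or_pos s₁
      · norm_num
      · have : (1 + s₁) * (s₁ - 1) + 1 = s₁ * (s₁ - 1) + s₁ := by rw [one_add_mul]; lia
        rw [Nat.sub_zero]
        lia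
  · obtain hs₁ | ⟨rfl, rfl⟩ : s₁ - t₀ - 1 = 0 ∨ s₁ = 2 ∧ t₀ = 0 := by lia
    · rw [hs₁]
      lia
    · lia
  · have : s₀ ≤ 2 := by lia
    have : s₁ ≤ 3 := by lia
    interval_cases s₀ <;> interval_cases s₁ <;> lia

theorem IsAdmissible.root_condition (h : IsAdmissible (s₀ + t₀) (s₁ + t₁))
    {b k l r : ℕ} (hl : l < s₀ + s₁ + (t₀ + t₁)) (hr : r < b) :
    (s₀ + s₁) * (t₀ + t₁) * k + s₁ * t₁ < (t₀ + t₁) * (blockShift (s₀ + t₀) k l + r + 1) ∨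
      (s₀ + s₁) * (blockShift (s₀ + t₀) k l + r + 1 - b) <
        (s₀ + s₁) * (s₀ + s₁ - 1) * k + s₁ * (s₁ - 1) + (s₀ + s₁) := by
  rw [blockShift]
  obtain hsl | hls := le_or_gt (s₀ + s₁) l
  · left
    calc (s₀ + s₁) * (t₀ + t₁) * k + s₁ * t₁
        < (s₀ + s₁) * (t₀ + t₁) * k + (t₀ + t₁) * (s₁ - t₀ + 1) := by
          rw [mul_comm s₁]
          exact Nat.add_lt_add_left (h.mul_lt_mul (by lia)) _
      _ = (t₀ + t₁) * (k * (s₀ + s₁) + (s₁ - t₀) + 1) := by ring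
      _ ≤ (t₀ + t₁) * (k * l + (l - (s₀ + t₀)) + r + 1) := by
          have := Nat.mul_le_mul_left k hsl
          exact Nat.mul_le_mul_left _ (by lia)
  · right
    calc (s₀ + s₁) * (k * l + (l - (s₀ + t₀)) + r + 1 - b)
        ≤ (s₀ + s₁) * (k * (s₀ + s₁ - 1) + (s₁ - t₀ - 1)) := by
          have := Nat.mul_le_mul_left k (Nat.le_sub_one_of_lt hls)
          exact Nat.mul_le_mul_left _ (by lia)
      _ = (s₀ + s₁) * (s₀ + s₁ - 1) * k + (s₀ + s₁) * (s₁ - t₀ - 1) := by ring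
      _ < (s₀ + s₁) * (s₀ + s₁ - 1) * k + s₁ * (s₁ - 1) + (s₀ + s₁) := by
          rw [add_assoc]
          exact Nat.add_lt_add_left (h.mul_lt_add (by lia)) _

end Roots

section Formula

variable {σ : Type*} [Fintype σ] [DecidableEq σ] {B : Finset σ} {b k : ℕ}

theorem IsAdmissible.blockExponent_root_condition (h : IsAdmissible #Bᶜ #B) {l r : ℕ}
    (hl : l < Fintype.card σ) (hr : r < b) (S : Finset σ) :
    ∑ l ∈ S, ∑ j ∈ Sᶜ, blockExponent B k (l, j) < #Sᶜ * (blockShift #Bᶜ k l + r + 1) ∨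
      #S * (blockShift #Bᶜ k l + r + 1 - b) <
        ∑ p ∈ S.offDiag, blockExponent B k p + #S := by
  have hB : #B = #(S ∩ B) + #(Sᶜ ∩ B) := by
    rw [inter_comm, inter_comm Sᶜ, ← sdiff_eq_inter_compl, card_inter_add_card_sdiff]
  have hBc : #Bᶜ = #(S ∩ Bᶜ) + #(Sᶜ ∩ Bᶜ) := by
    rw [inter_comm, inter_comm Sᶜ, ← sdiff_eq_inter_compl, card_inter_add_card_sdiff]
  have hS : #S = #(S ∩ Bᶜ) + #(S ∩ B) := by
    rw [add_comm, ← sdiff_eq_inter_compl, card_inter_add_card_sdiff]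
  have hSc : #Sᶜ = #(Sᶜ ∩ Bᶜ) + #(Sᶜ ∩ B) := by
    rw [add_comm, ← sdiff_eq_inter_compl, card_inter_add_card_sdiff]
  rw [sum_sum_blockExponent, sum_offDiag_blockExponent, hBc, hS, hSc]
  rw [hB, hBc] at h
  exact h.root_condition (by rw [← hS, ← hSc, card_add_card_compl]; exact hl) hr

theorem constantTerm_blockExponent_mul_prod (h : IsAdmissible #Bᶜ #B) (hb : b ≤ k) (a : ℕ) :
    constantTerm (blockExponent B k) a b *
        ∏ l ∈ range (Fintype.card σ), ((blockShift #Bᶜ k l + 1).ascFactorial b : ℚ) =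
      constantTerm (blockExponent B k) 0 0 *
        ∏ l ∈ range (Fintype.card σ), ((a + blockShift #Bᶜ k l + 1).ascFactorial b : ℚ) := by
  obtain ⟨P, hdeg, heval, hroot⟩ :=
    exists_polynomial_eval_eq_constantTerm (blockExponent B k) b
  let root (p : ℕ × ℕ) : ℚ := -(blockShift #Bᶜ k p.1 + p.2 + 1 : ℕ)
  have hinj : Set.InjOn root (range (Fintype.card σ) ×ˢ range b : Finset (ℕ × ℕ)) :=
    fun p hp q hq hpq => injOn_blockShift_add _ hb _ hp hq
      (Nat.succ_injective (Nat.cast_injective (neg_injective hpq)))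
  have hzero : ∀ p ∈ range (Fintype.card σ) ×ˢ range b, P.eval (root p) = 0 := fun p hp => by
    obtain ⟨hl, hr⟩ := mem_product.1 hp
    exact hroot _ (h.blockExponent_root_condition (mem_range.1 hl) (mem_range.1 hr))
  have hprod : ∀ x : ℕ, ∏ p ∈ range (Fintype.card σ) ×ˢ range b, ((x : ℚ) - root p) =
      ∏ l ∈ range (Fintype.card σ), ((x + blockShift #Bᶜ k l + 1).ascFactorial b : ℚ) :=
    fun x => by
      rw [prod_product]
      refine prod_congr rfl fun l _ => ?_
      rw [Nat.ascFactorial_eq_prod_range, Nat.cast_prod]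
      exact prod_congr rfl fun r _ => by simp only [root]; push_cast; ring
  have := eval_mul_prod_sub_eq hinj hzero (by simpa using hdeg) (a : ℚ) (0 : ℕ)
  simpa only [hprod, heval, constantTerm_zero_left _ b, zero_add] using this

theorem constantTerm_blockExponent (h : IsAdmissible #Bᶜ #B) (hb : b ≤ k) (a : ℕ) :
    constantTerm (blockExponent B k) a b = constantTerm (blockExponent B k) 0 0 *
      ∏ l ∈ range (Fintype.card σ),
        (((a + b + blockShift #Bᶜ k l).factorial * (blockShift #Bᶜ k l).factorial : ℚ) /
          ((a + blockShift #Bᶜ k l).factorial * (b + blockShift #Bᶜ k l).factorial)) := by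
  have hasc : ∀ g : ℕ, ((g + 1).ascFactorial b : ℚ) = (g + b).factorial / g.factorial := fun g => by
    rw [eq_div_iff (by positivity), mul_comm]
    exact_mod_cast Nat.factorial_mul_ascFactorial g b
  have h0 : ∏ l ∈ range (Fintype.card σ), ((blockShift #Bᶜ k l + 1).ascFactorial b : ℚ) ≠ 0 :=
    prod_ne_zero_iff.2 fun l _ => by positivity
  rw [← mul_left_inj' h0, constantTerm_blockExponent_mul_prod h hb, mul_assoc,
    ← prod_mul_distrib]
  congr 1
  refine prod_congr rfl fun l _ => ?_
  rw [hasc, hasc, add_right_comm a, add_comm b]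
  field_simp

end Formula

section Homogenization

variable {n : ℕ}

@[to_additive]
theorem prod_univ_erase_zero {M : Type*} [CommMonoid M] (f : Fin (n + 1) → M) :
    ∏ j ∈ univ.erase 0, f j = ∏ j : Fin n, f j.succ := by
  rw [← compl_singleton, ← Fin.image_succ_univ, prod_image (Fin.succ_injective n).injOn]

@[to_additive]
theorem prod_univ_erase_succ {M : Type*} [CommMonoid M] (f : Fin (n + 1) → M) (l : Fin n) :
    ∏ j ∈ univ.erase l.succ, f j = f 0 * ∏ j ∈ univ.erase l, f j.succ := by
  have h : univ.erase l.succ = insert 0 ((univ.erase l).image Fin.succ) := by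
    ext j
    cases j using Fin.cases <;> simp [Fin.succ_ne_zero, (Fin.succ_ne_zero _).symm]
  rw [h, prod_insert (by simp [Fin.succ_ne_zero]), prod_image (Fin.succ_injective n).injOn]

theorem coeff_eval_one_finSuccEquiv {R : Type*} [CommRing R] {F : MvPolynomial (Fin (n + 1)) R}
    {d : ℕ} (hF : F.IsHomogeneous d) {N : Fin (n + 1) →₀ ℕ} (hN : ∑ l, N l = d) :
    coeff N.tail ((finSuccEquiv R n F).eval 1) = coeff N F := by
  have hcoeff : ∀ i ≠ N 0, coeff (N.tail.cons i) F = 0 := fun i hi => by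
    by_contra h
    have := sum_eq_of_mem_support hF (mem_support_iff.2 h)
    rw [← hN, Fin.sum_univ_succ, Fin.sum_univ_succ] at this
    simp only [Finsupp.cons_zero, Finsupp.cons_succ, Finsupp.tail_apply] at this
    exact hi (Nat.add_right_cancel this)
  rw [Polynomial.eval_eq_sum_range' (n := (finSuccEquiv R n F).natDegree + N 0 + 1) (by lia),
    coeff_sum]
  simp only [one_pow, mul_one, finSuccEquiv_coeff_coeff]
  rw [sum_eq_single (N 0) (fun i _ hi => hcoeff i hi) (by simp), Finsupp.cons_tail]

variable (κ : Fin n × Fin n → ℕ) (a b : ℕ)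

/-- The exponents of the homogenization of the Laurent polynomial in `constantTerm κ a b`: the
index `0` is that of the homogenizing variable. -/
def consExponent (p : Fin (n + 1) × Fin (n + 1)) : ℕ :=
  Fin.cases a (fun l => Fin.cases b (fun j => κ (l, j)) p.2) p.1

@[simp]
theorem consExponent_zero_succ (j : Fin n) : consExponent κ a b (0, j.succ) = a := rfl

@[simp]
theorem consExponent_succ_zero (l : Fin n) : consExponent κ a b (l.succ, 0) = b := rfl

@[simp]
theorem consExponent_succ_succ (l j : Fin n) :
    consExponent κ a b (l.succ, j.succ) = κ (l, j) := rfl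

theorem prod_offDiag_consExponent {M : Type*} [CommMonoid M]
    (f : Fin (n + 1) × Fin (n + 1) → M) :
    ∏ p ∈ univ.offDiag, f p ^ consExponent κ a b p =
      (∏ p ∈ univ.offDiag, f (p.1.succ, p.2.succ) ^ κ p) *
        ∏ l : Fin n, (f (0, l.succ) ^ a * f (l.succ, 0) ^ b) := by
  simp only [prod_offDiag_eq_prod_prod_erase, Fin.prod_univ_succ, prod_univ_erase_zero,
    prod_univ_erase_succ, prod_mul_distrib, consExponent_zero_succ, consExponent_succ_zero,
    consExponent_succ_succ]
  rw [← mul_assoc, mul_comm]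

theorem centralExponent_consExponent :
    centralExponent (consExponent κ a b) 0 =
      Finsupp.equivFunOnFinite.symm (Fin.cons (n * a) (centralExponent κ b)) := by
  ext l
  cases l using Fin.cases with
  | zero => simp [sum_univ_erase_zero]
  | succ l => simp [sum_univ_erase_succ]

theorem constantTerm_consExponent :
    constantTerm (consExponent κ a b) 0 0 = constantTerm κ a b := by
  have hF := coeff_eval_one_finSuccEquiv
    (isHomogeneous_diffProd (R := ℚ) (κ := consExponent κ a b) univ.offDiag)
    (N := centralExponent (consExponent κ a b) 0) (by rw [sum_centralExponent, mul_zero, zero_add])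
  have hN : (centralExponent (consExponent κ a b) 0).tail = centralExponent κ b := by
    rw [centralExponent_consExponent]
    rfl
  rw [hN, diffProd, prod_offDiag_consExponent] at hF
  simp only [map_mul, map_prod, map_pow, map_sub, finSuccEquiv_X_zero, finSuccEquiv_X_succ,
    Polynomial.eval_mul, Polynomial.eval_prod, Polynomial.eval_pow, Polynomial.eval_sub,
    Polynomial.eval_X, Polynomial.eval_C] at hF
  simp only [constantTerm, diffProd, pow_zero, mul_one, prod_const_one]
  rw [prod_offDiag_consExponent, hF]

end Homogenization

section ForresterCT

variable {σ : Type*} [Fintype σ] [DecidableEq σ] (B : Finset σ) (k : ℕ)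

theorem prod_offDiag_pow_blockExponent {M : Type*} [CommMonoid M] (f : σ × σ → M) :
    ∏ p ∈ univ.offDiag, f p ^ blockExponent B k p =
      (∏ p ∈ B.offDiag, f p) * ∏ p ∈ univ.offDiag, f p ^ k := by
  have h : B.offDiag = univ.offDiag.filter fun p => p.1 ∈ B ∧ p.2 ∈ B := by
    ext p
    simp only [mem_filter, mem_offDiag, mem_univ, true_and]
    tauto
  rw [h, prod_filter, ← prod_mul_distrib]
  refine prod_congr rfl fun p _ => ?_
  rw [blockExponent, add_comm, pow_add, pow_ite, pow_one, pow_zero]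

theorem sum_erase_blockExponent (l : σ) :
    ∑ j ∈ univ.erase l, blockExponent B k (l, j) =
      (Fintype.card σ - 1) * k + if l ∈ B then #B - 1 else 0 := by
  have h := sum_sum_blockExponent B k {l} (univ.erase l)
  rw [sum_singleton, card_singleton, one_mul, card_erase_of_mem (mem_univ l), card_univ,
    erase_inter, univ_inter] at h
  rw [h]
  split_ifs with hl
  · rw [singleton_inter_of_mem hl, card_singleton, one_mul, card_erase_of_mem hl]
  · rw [singleton_inter_of_notMem hl, card_empty, zero_mul]

/-- The block of indices `n₀ ≤ l < n`, on which the exponents in Forrester's product are `k + 1`. -/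
def finalBlock (n₀ n : ℕ) : Finset (Fin n) := univ.filter fun l => n₀ ≤ (l : ℕ)

theorem card_compl_finalBlock {n₀ n : ℕ} (h : n₀ ≤ n) : #(finalBlock n₀ n)ᶜ = n₀ := by
  simp only [finalBlock, compl_filter, not_le, Fin.card_filter_val_lt, min_eq_right h]

theorem card_finalBlock {n₀ n : ℕ} (h : n₀ ≤ n) : #(finalBlock n₀ n) = n - n₀ := by
  have := card_compl_add_card (finalBlock n₀ n)
  rw [card_compl_finalBlock h, Fintype.card_fin] at this
  lia

theorem finalBlock_zero (n : ℕ) : finalBlock 0 n = univ := by simp [finalBlock]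

theorem finalBlock_self (n : ℕ) : finalBlock n n = ∅ := by
  simp [finalBlock, filter_eq_empty_iff]

theorem consExponent_blockExponent (n₀ n k : ℕ) :
    consExponent (blockExponent (finalBlock n₀ n) k) k k =
      blockExponent (finalBlock (n₀ + 1) (n + 1)) k := by
  funext ⟨l, j⟩
  cases l using Fin.cases <;> cases j using Fin.cases <;>
    simp [consExponent, blockExponent, finalBlock]

theorem forresterCT_eq_constantTerm (n₀ n₁ a b k : ℕ) :
    forresterCT n₀ n₁ a b k =
      constantTerm (blockExponent (finalBlock n₀ (n₀ + n₁)) k) a b := by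
  have hN : centralExponent (blockExponent (finalBlock n₀ (n₀ + n₁)) k) b =
      Finsupp.equivFunOnFinite.symm fun l : Fin (n₀ + n₁) =>
        b + (n₀ + n₁ - 1) * k + if n₀ ≤ (l : ℕ) then n₁ - 1 else 0 := by
    ext l
    rw [centralExponent_apply, sum_erase_blockExponent, Fintype.card_fin,
      card_finalBlock (Nat.le_add_right n₀ n₁), ← add_assoc]
    simp [finalBlock]
  rw [← constantTerm_consExponent, constantTerm, centralExponent_consExponent, hN, diffProd,
    prod_offDiag_consExponent]
  simp only [pow_zero, mul_one, prod_const_one]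
  rw [prod_offDiag_pow_blockExponent _ _ fun p : Fin (n₀ + n₁) × Fin (n₀ + n₁) =>
      (X p.1.succ - X p.2.succ : MvPolynomial (Fin (n₀ + n₁ + 1)) ℚ),
    prod_offDiag_eq_prod_prod_erase, prod_offDiag_eq_prod_prod_erase, mul_right_comm]
  rfl

theorem forresterCT_succ_zero_zero (n₀ n₁ k : ℕ) :
    forresterCT (n₀ + 1) n₁ 0 0 k = forresterCT n₀ n₁ k k k := by
  rw [forresterCT_eq_constantTerm, forresterCT_eq_constantTerm, Nat.add_right_comm,
    ← consExponent_blockExponent, constantTerm_consExponent]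

theorem forresterCT_zero_left (n a b k : ℕ) :
    forresterCT 0 n a b k = forresterCT n 0 a b (k + 1) := by
  have h : blockExponent (finalBlock 0 n) k = blockExponent (finalBlock n n) (k + 1) := by
    funext p
    simp [blockExponent, finalBlock_zero, finalBlock_self]
  rw [forresterCT_eq_constantTerm, forresterCT_eq_constantTerm, zero_add, h, add_zero]

theorem forresterCT_eq_mul {n₀ n₁ b k : ℕ} (h : IsAdmissible n₀ n₁) (hb : b ≤ k) (a : ℕ) :
    forresterCT n₀ n₁ a b k = forresterCT n₀ n₁ 0 0 k * ∏ l ∈ range (n₀ + n₁),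
      (((a + b + blockShift n₀ k l).factorial * (blockShift n₀ k l).factorial : ℚ) /
        ((a + blockShift n₀ k l).factorial * (b + blockShift n₀ k l).factorial)) := by
  have hle := Nat.le_add_right n₀ n₁
  rw [forresterCT_eq_constantTerm, forresterCT_eq_constantTerm, constantTerm_blockExponent _ hb]
  · rw [card_compl_finalBlock hle, Fintype.card_fin]
  · rwa [card_compl_finalBlock hle, card_finalBlock hle, Nat.add_sub_cancel_left]

end ForresterCT

section ForresterRHS

theorem forresterRHS_eq_mul (n₀ n₁ a b k : ℕ) :
    forresterRHS n₀ n₁ a b k = forresterRHS n₀ n₁ 0 0 k * ∏ l ∈ range (n₀ + n₁),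
      (((a + b + blockShift n₀ k l).factorial * (blockShift n₀ k l).factorial : ℚ) /
        ((a + blockShift n₀ k l).factorial * (b + blockShift n₀ k l).factorial)) := by
  rw [prod_range_add, forresterRHS, forresterRHS, mul_mul_mul_comm, ← prod_mul_distrib,
    ← prod_mul_distrib]
  congr 1
  · refine prod_congr rfl fun l hl => ?_
    have hshift : blockShift n₀ k l = k * l := by
      rw [blockShift, Nat.sub_eq_zero_of_le (mem_range.1 hl).le, add_zero]
    simp only [hshift, zero_add, add_zero]
    field_simp
  · refine prod_congr rfl fun j _ => ?_
    have hshift : blockShift n₀ k (n₀ + j) = (k + 1) * j + k * n₀ := by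
      rw [blockShift, Nat.add_sub_cancel_left]
      ring
    have hreassoc : ∀ c, (k + 1) * j + c + k * n₀ = c + ((k + 1) * j + k * n₀) := fun c => by ring
    rw [hshift, add_assoc ((k + 1) * j) a b]
    simp only [hreassoc, add_zero]
    field_simp

theorem forresterRHS_succ_zero_zero (n₀ n₁ k : ℕ) :
    forresterRHS (n₀ + 1) n₁ 0 0 k = forresterRHS n₀ n₁ k k k := by
  rw [forresterRHS, forresterRHS, prod_range_succ']
  simp only [zero_add, add_zero, mul_zero, mul_one, Nat.factorial_zero, Nat.cast_one, one_mul]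
  rw [div_self (by positivity), mul_one]
  congr 1
  · refine prod_congr rfl fun l _ => ?_
    rw [show k + k + k * l = k * (l + 1 + 1) by ring, show k + k * l = k * (l + 1) by ring]
    field_simp
  · refine prod_congr rfl fun j _ => ?_
    rw [show (k + 1) * j + k + k + k * n₀ = k * j + k + j + k * (n₀ + 1) by ring,
      show (k + 1) * j + k + k * n₀ = (k + 1) * j + k * (n₀ + 1) by ring,
      show k * j + k + j + k * n₀ = (k + 1) * j + k * (n₀ + 1) by ring]
    field_simp

theorem forresterRHS_zero_left (n k : ℕ) :
    forresterRHS 0 n 0 0 k = forresterRHS n 0 0 0 (k + 1) := by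
  rw [forresterRHS, forresterRHS, prod_range_zero, one_mul, prod_range_zero, mul_one]
  refine prod_congr rfl fun j _ => ?_
  rw [show (k + 1) * (j + 1) = k * j + k + j + 1 by ring]
  simp only [zero_add, add_zero, mul_zero, Nat.factorial_succ]
  push_cast
  field_simp
  ring

theorem forresterCT_eq_forresterRHS_of_eq {n₀ n₁ b k : ℕ} (h : IsAdmissible n₀ n₁) (hb : b ≤ k)
    (h0 : forresterCT n₀ n₁ 0 0 k = forresterRHS n₀ n₁ 0 0 k) (a : ℕ) :
    forresterCT n₀ n₁ a b k = forresterRHS n₀ n₁ a b k := by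
  rw [forresterCT_eq_mul h hb, h0, ← forresterRHS_eq_mul]

theorem forresterCT_zero_right_eq_forresterRHS (n k : ℕ) :
    forresterCT n 0 0 0 k = forresterRHS n 0 0 0 k := by
  induction n with
  | zero => simp [forresterCT_eq_constantTerm, forresterRHS, constantTerm, diffProd, coeff_one,
      eq_iff_true_of_subsingleton]
  | succ n ih =>
    rw [forresterCT_succ_zero_zero, forresterRHS_succ_zero_zero]
    exact forresterCT_eq_forresterRHS_of_eq (.inr (.inl zero_le)) le_rfl ih k

theorem forresterCT_zero_zero_eq_forresterRHS {n₀ n₁ : ℕ} (h : IsAdmissible n₀ n₁) (k : ℕ) :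
    forresterCT n₀ n₁ 0 0 k = forresterRHS n₀ n₁ 0 0 k := by
  induction n₀ with
  | zero => rw [forresterCT_zero_left, forresterRHS_zero_left,
      forresterCT_zero_right_eq_forresterRHS]
  | succ n₀ ih =>
    have h' : IsAdmissible n₀ n₁ := by unfold IsAdmissible at *; lia
    rw [forresterCT_succ_zero_zero, forresterRHS_succ_zero_zero]
    exact forresterCT_eq_forresterRHS_of_eq h' le_rfl (ih h') k

end ForresterRHS

section RationalSequences

/-- The `ℚ`-algebra of sequences `k ↦ P(k) / Q(k)` with `P, Q ∈ ℚ[X]`, where `Q` has no root in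
`ℕ`. -/
def rationalSeq : Subalgebra ℚ (ℕ → ℚ) where
  carrier := {f | ∃ P Q : Polynomial ℚ, ∀ k : ℕ,
    Q.eval (k : ℚ) ≠ 0 ∧ f k = P.eval (k : ℚ) / Q.eval (k : ℚ)}
  algebraMap_mem' c := ⟨Polynomial.C c, 1, fun k => by simp⟩
  add_mem' := by
    rintro f f' ⟨P, Q, h⟩ ⟨P', Q', h'⟩
    refine ⟨P * Q' + Q * P', Q * Q', fun k => ?_⟩
    rw [Pi.add_apply, (h k).2, (h' k).2, div_add_div _ _ (h k).1 (h' k).1]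
    simp [(h k).1, (h' k).1]
  mul_mem' := by
    rintro f f' ⟨P, Q, h⟩ ⟨P', Q', h'⟩
    refine ⟨P * P', Q * Q', fun k => ?_⟩
    rw [Pi.mul_apply, (h k).2, (h' k).2, div_mul_div_comm]
    simp [(h k).1, (h' k).1]

theorem polynomial_eval_mem_rationalSeq (P : Polynomial ℚ) :
    (fun k : ℕ => P.eval (k : ℚ)) ∈ rationalSeq :=
  ⟨P, 1, fun k => by simp⟩

theorem inv_mem_rationalSeq {f : ℕ → ℚ} (hf : f ∈ rationalSeq) (h0 : ∀ k, f k ≠ 0) :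
    f⁻¹ ∈ rationalSeq := by
  obtain ⟨P, Q, h⟩ := hf
  refine ⟨Q, P, fun k => ⟨fun hP => h0 k ?_, ?_⟩⟩
  · rw [(h k).2, hP, zero_div]
  · rw [Pi.inv_apply, (h k).2, inv_div]

theorem eq_of_mem_rationalSeq {f g : ℕ → ℚ} (hf : f ∈ rationalSeq) (hg : g ∈ rationalSeq)
    (h : ∀ᶠ k in Filter.atTop, f k = g k) : f = g := by
  obtain ⟨P, Q, hPQ⟩ := hf
  obtain ⟨P', Q', hPQ'⟩ := hg
  have key : P * Q' = P' * Q := by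
    have hinf : {k : ℕ | f k = g k}.Infinite := Nat.frequently_atTop_iff_infinite.1 h.frequently
    refine Polynomial.eq_of_infinite_eval_eq _ _
      ((hinf.image Nat.cast_injective.injOn).mono ?_)
    rintro _ ⟨k, hk, rfl⟩
    rw [Set.mem_ofPred_eq, (hPQ k).2, (hPQ' k).2, div_eq_div_iff (hPQ k).1 (hPQ' k).1] at hk
    simpa using hk
  funext k
  rw [(hPQ k).2, (hPQ' k).2, div_eq_div_iff (hPQ k).1 (hPQ' k).1, ← Polynomial.eval_mul, key,
    Polynomial.eval_mul]

theorem mem_of_rationalSeq_mul_mem {V : Submodule rationalSeq (ℕ → ℚ)} {r f : ℕ → ℚ}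
    (hr : r ∈ rationalSeq) (h0 : ∀ k, r k ≠ 0) (h : r * f ∈ V) : f ∈ V := by
  have hf : (⟨r⁻¹, inv_mem_rationalSeq hr h0⟩ : rationalSeq) • (r * f) = f := by
    funext k
    exact inv_mul_cancel_left₀ (h0 k) (f k)
  exact hf ▸ V.smul_mem _ h

end RationalSequences

section VandermondeSq

theorem derivation_prod {ι R A : Type*} [DecidableEq ι] [CommSemiring R] [CommSemiring A]
    [Algebra R A] (D : Derivation R A A) (s : Finset ι) (f : ι → A) :
    D (∏ p ∈ s, f p) = ∑ p ∈ s, (∏ q ∈ s.erase p, f q) * D (f p) := by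
  induction s using Finset.induction_on with
  | empty => simp
  | insert p s hp ih =>
    rw [prod_insert hp, sum_insert hp, D.leibniz, ih, erase_insert hp, smul_eq_mul, smul_eq_mul,
      mul_sum, add_comm]
    refine congrArg _ (sum_congr rfl fun q hq => ?_)
    have hpq : p ≠ q := fun h => hp (h ▸ hq)
    rw [erase_insert_of_ne hpq, prod_insert (notMem_mono (erase_subset q s) hp), mul_assoc]

theorem coeff_X_mul_pderiv {σ R : Type*} [CommSemiring R] (i : σ) (N : σ →₀ ℕ)
    (F : MvPolynomial σ R) :
    coeff N (X i * pderiv i F) = N i * coeff N F := by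
  classical
  rw [coeff_X_mul']
  split_ifs with h
  · have hi : 1 ≤ N i := Nat.one_le_iff_ne_zero.2 (Finsupp.mem_support_iff.1 h)
    rw [coeff_pderiv, tsub_add_cancel_of_le (Finsupp.single_le_iff.2 hi), Finsupp.tsub_apply,
      Finsupp.single_eq_same, mul_comm]
    norm_cast
    rw [Nat.sub_add_cancel hi]
  · rw [Finsupp.notMem_support_iff.1 h, Nat.cast_zero, zero_mul]

theorem X_sub_X_ne_zero {σ : Type*} {i j : σ} (h : i ≠ j) : (X i - X j : MvPolynomial σ ℚ) ≠ 0 :=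
  sub_ne_zero.2 (X_injective.ne h)

variable {σ : Type*} [Fintype σ]

variable (σ) in
/-- The polynomial `∏_{i ≠ j} (X_i - X_j)`, which up to sign is the square of the Vandermonde
determinant. -/
noncomputable def vandermondeSq : MvPolynomial σ ℚ := ∏ p ∈ univ.offDiag, (X p.1 - X p.2)

theorem rename_vandermondeSq (τ : Equiv.Perm σ) :
    rename τ (vandermondeSq σ) = vandermondeSq σ := by
  rw [vandermondeSq, map_prod]
  refine prod_equiv (τ.prodCongr τ) (fun p => ?_) fun p _ => ?_
  · simp
  · simp

variable [DecidableEq σ]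

/-- The cofactor of the factor `X_i - X_j` in `vandermondeSq`, for `i ≠ j`. -/
noncomputable def vandermondeSqErase (i j : σ) : MvPolynomial σ ℚ :=
  ∏ p ∈ univ.offDiag.erase (i, j), (X p.1 - X p.2)

theorem sub_mul_vandermondeSqErase {i j : σ} (h : i ≠ j) :
    (X i - X j) * vandermondeSqErase i j = vandermondeSq σ := by
  have hmem : (i, j) ∈ univ.offDiag := mem_offDiag.2 ⟨mem_univ i, mem_univ j, h⟩
  rw [vandermondeSqErase, vandermondeSq, ← mul_prod_erase _ _ hmem]

theorem vandermondeSqErase_swap {i j : σ} (h : i ≠ j) :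
    vandermondeSqErase j i = -vandermondeSqErase i j := by
  apply mul_left_cancel₀ (X_sub_X_ne_zero h)
  linear_combination sub_mul_vandermondeSqErase h - sub_mul_vandermondeSqErase h.symm

theorem rename_swap_vandermondeSqErase {i j : σ} (h : i ≠ j) :
    rename (Equiv.swap i j) (vandermondeSqErase i j) = -vandermondeSqErase i j := by
  apply mul_left_cancel₀ (X_sub_X_ne_zero h.symm)
  have h' := congrArg (rename (Equiv.swap i j)) (sub_mul_vandermondeSqErase h)
  rw [rename_vandermondeSq, map_mul, map_sub, rename_X, rename_X, Equiv.swap_apply_left,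
    Equiv.swap_apply_right] at h'
  linear_combination h' - sub_mul_vandermondeSqErase h

theorem pderiv_vandermondeSq (i : σ) :
    pderiv i (vandermondeSq σ) = 2 * ∑ j ∈ univ.erase i, vandermondeSqErase i j := by
  have h : ∀ l, ∑ j ∈ univ.erase l, vandermondeSqErase l j * pderiv i (X l - X j) =
      (if l = i then ∑ j ∈ univ.erase i, vandermondeSqErase i j else 0) +
        if l ∈ univ.erase i then vandermondeSqErase i l else 0 := by
    intro l
    rcases eq_or_ne l i with rfl | hl
    · rw [if_pos rfl, if_neg (notMem_erase l univ), add_zero]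
      refine sum_congr rfl fun j hj => ?_
      rw [map_sub, pderiv_X_self, pderiv_X_of_ne (ne_of_mem_erase hj), sub_zero, mul_one]
    · rw [if_neg hl, if_pos (mem_erase.2 ⟨hl, mem_univ l⟩), zero_add,
        sum_eq_single_of_mem i (mem_erase.2 ⟨hl.symm, mem_univ i⟩), map_sub, pderiv_X_of_ne hl,
        pderiv_X_self, zero_sub, mul_neg_one, vandermondeSqErase_swap hl.symm, neg_neg]
      intro j _ hj
      rw [map_sub, pderiv_X_of_ne hl, pderiv_X_of_ne hj, sub_zero, mul_zero]
  rw [vandermondeSq, derivation_prod]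
  change ∑ p ∈ univ.offDiag, vandermondeSqErase p.1 p.2 * _ = _
  rw [sum_offDiag_eq_sum_sum_erase]
  simp only [h, sum_add_distrib, sum_ite_eq', mem_univ, if_true, sum_ite_mem, univ_inter, two_mul]

end VandermondeSq

section DysonCoeff

variable {σ : Type*} [Fintype σ]

variable (σ) in
/-- The exponent of the monomial `∏ l, X l ^ m`. -/
noncomputable def constExponent (m : ℕ) : σ →₀ ℕ := Finsupp.equivFunOnFinite.symm fun _ => m

@[simp]
theorem constExponent_apply (m : ℕ) (l : σ) : constExponent σ m l = m := rfl

theorem coeff_constExponent_rename {R : Type*} [CommSemiring R] (τ : Equiv.Perm σ) (m : ℕ)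
    (F : MvPolynomial σ R) :
    coeff (constExponent σ m) (rename τ F) = coeff (constExponent σ m) F := by
  have h : (constExponent σ m).mapDomain τ = constExponent σ m := by
    ext l
    rw [← τ.apply_symm_apply l, Finsupp.mapDomain_apply τ.injective, constExponent_apply,
      constExponent_apply]
  conv_lhs => rw [← h]
  rw [coeff_rename_mapDomain _ τ.injective]

/-- The constant term of `(∏_l x_l)^(-M) Q(x) ∏_{i ≠ j} (1 - x_j / x_i)^k`. -/
noncomputable def dysonCoeff (M : ℕ) (Q : MvPolynomial σ ℚ) (k : ℕ) : ℚ :=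
  coeff (constExponent σ (M + (Fintype.card σ - 1) * k)) (Q * vandermondeSq σ ^ k)

theorem dysonCoeff_rename (τ : Equiv.Perm σ) (M : ℕ) (Q : MvPolynomial σ ℚ) (k : ℕ) :
    dysonCoeff M (rename τ Q) k = dysonCoeff M Q k := by
  rw [dysonCoeff, ← rename_vandermondeSq τ, ← map_pow, ← map_mul, coeff_constExponent_rename,
    dysonCoeff]

theorem dysonCoeff_add (M m : ℕ) (Q : MvPolynomial σ ℚ) (k : ℕ) :
    dysonCoeff (M + m) (monomial (constExponent σ m) 1 * Q) k = dysonCoeff M Q k := by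
  have h : constExponent σ (M + m + (Fintype.card σ - 1) * k) =
      constExponent σ m + constExponent σ (M + (Fintype.card σ - 1) * k) := by
    ext l
    simp only [constExponent_apply, Finsupp.add_apply]
    ring
  rw [dysonCoeff, h, mul_assoc, coeff_monomial_mul, one_mul, dysonCoeff]

theorem dysonCoeff_monomial_eq_zero {M : ℕ} {e : σ →₀ ℕ} (h : ∑ l, e l ≠ Fintype.card σ * M)
    (k : ℕ) : dysonCoeff M (monomial e 1) k = 0 := by
  have hΔ : (vandermondeSq σ).IsHomogeneous (∑ _p ∈ (univ : Finset σ).offDiag, 1) :=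
    .prod _ _ _ fun p _ => (isHomogeneous_X ℚ p.1).sub (isHomogeneous_X ℚ p.2)
  have hF := (isHomogeneous_monomial (1 : ℚ) (e.degree_eq_sum)).mul (hΔ.pow k)
  by_contra h0
  have h' := sum_eq_of_mem_support hF (mem_support_iff.2 h0)
  simp only [constExponent_apply, sum_const, card_univ, smul_eq_mul, mul_one, offDiag_card,
    ← Nat.mul_sub_one, mul_add, ← mul_assoc] at h'
  lia

theorem dysonCoeff_monomial_zero (M : ℕ) (e : σ →₀ ℕ) (i : σ) :
    ((e i : ℚ) - M) * dysonCoeff M (monomial e 1) 0 = 0 := by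
  classical
  rw [dysonCoeff, pow_zero, mul_one, mul_zero, add_zero, coeff_monomial]
  split_ifs with h
  · rw [h, constExponent_apply, sub_self, zero_mul]
  · rw [mul_zero]

variable [DecidableEq σ]

/-- The constant term of
`(∏_l x_l)^(-M) Q(x) ((x_i + x_j) / (x_i - x_j)) ∏_{i ≠ j} (1 - x_j / x_i)^(k + 1)`. -/
noncomputable def pairCoeff (M : ℕ) (i j : σ) (Q : MvPolynomial σ ℚ) (k : ℕ) : ℚ :=
  coeff (constExponent σ (M + (Fintype.card σ - 1) * (k + 1)))
    (Q * ((X i + X j) * vandermondeSqErase i j) * vandermondeSq σ ^ k)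

theorem pairCoeff_rename_swap (M : ℕ) {i j : σ} (h : i ≠ j) (Q : MvPolynomial σ ℚ) (k : ℕ) :
    pairCoeff M i j (rename (Equiv.swap i j) Q) k = -pairCoeff M i j Q k := by
  rw [pairCoeff, pairCoeff, ← coeff_neg, ← coeff_constExponent_rename (Equiv.swap i j) _ (-_)]
  simp only [map_neg, map_mul, map_pow, map_add, rename_X, rename_vandermondeSq,
    rename_swap_vandermondeSqErase h, Equiv.swap_apply_left, Equiv.swap_apply_right]
  congr 1
  ring

theorem pairCoeff_X_mul_sub (M : ℕ) {i j : σ} (h : i ≠ j) (Q : MvPolynomial σ ℚ) (k : ℕ) :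
    pairCoeff M i j (X i * Q) k - pairCoeff M i j (X j * Q) k =
      dysonCoeff M (X i * Q) (k + 1) + dysonCoeff M (X j * Q) (k + 1) := by
  rw [pairCoeff, pairCoeff, dysonCoeff, dysonCoeff, ← coeff_sub, ← coeff_add, pow_succ]
  congr 1
  linear_combination (X i + X j) * Q * vandermondeSq σ ^ k * sub_mul_vandermondeSqErase h

-- Compare coefficients in `X_i ∂/∂X_i` of `X ^ e * vandermondeSq σ ^ (k + 1)`.
theorem dysonCoeff_monomial_succ (M : ℕ) (e : σ →₀ ℕ) (k : ℕ) (i : σ) :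
    ((e i : ℚ) - M) * dysonCoeff M (monomial e 1) (k + 1) +
      (k + 1) * ∑ j ∈ univ.erase i, pairCoeff M i j (monomial e 1) k = 0 := by
  have hX : X i * pderiv i (vandermondeSq σ) =
      C ((Fintype.card σ - 1 : ℕ) : ℚ) * vandermondeSq σ +
        ∑ j ∈ univ.erase i, (X i + X j) * vandermondeSqErase i j := by
    rw [pderiv_vandermondeSq, map_natCast, ← card_univ, ← card_erase_of_mem (mem_univ i),
      ← nsmul_eq_mul, ← sum_const, ← sum_add_distrib, mul_sum, mul_sum]
    refine sum_congr rfl fun j hj => ?_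
    linear_combination sub_mul_vandermondeSqErase (ne_of_mem_erase hj).symm
  have hF : X i * pderiv i (monomial e (1 : ℚ) * vandermondeSq σ ^ (k + 1)) =
      C (e i + (k + 1) * ((Fintype.card σ - 1 : ℕ) : ℚ)) *
          (monomial e 1 * vandermondeSq σ ^ (k + 1)) +
        C ((k : ℚ) + 1) * ∑ j ∈ univ.erase i,
          monomial e 1 * ((X i + X j) * vandermondeSqErase i j) * vandermondeSq σ ^ k := by
    have he := X_mul_pderiv_monomial (R := ℚ) (i := i) (m := e) (r := 1)
    rw [nsmul_eq_mul] at he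
    rw [← sum_mul, ← mul_sum, pderiv_mul, pderiv_pow, Nat.add_sub_cancel]
    simp only [map_add, map_mul, map_natCast, map_one, Nat.cast_add, Nat.cast_one] at hX ⊢
    linear_combination vandermondeSq σ ^ (k + 1) * he +
      (k + 1) * monomial e 1 * vandermondeSq σ ^ k * hX
  have h := coeff_X_mul_pderiv i (constExponent σ (M + (Fintype.card σ - 1) * (k + 1)))
    (monomial e (1 : ℚ) * vandermondeSq σ ^ (k + 1))
  rw [hF, coeff_add, coeff_C_mul, coeff_C_mul, coeff_sum, constExponent_apply] at h
  simp only [dysonCoeff, pairCoeff]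
  push_cast at h
  linear_combination h

end DysonCoeff

section DysonRationality

variable {σ : Type*}

theorem sum_add_single_one_sq [Fintype σ] (u : σ →₀ ℕ) (i : σ) :
    ∑ l, (u + Finsupp.single i 1 : σ →₀ ℕ) l ^ 2 = ∑ l, u l ^ 2 + 2 * u i + 1 := by
  classical
  have h (l : σ) : (u + Finsupp.single i 1 : σ →₀ ℕ) l ^ 2 =
      u l ^ 2 + if i = l then 2 * u l + 1 else 0 := by
    rw [Finsupp.add_apply, Finsupp.single_apply]
    split_ifs <;> ring
  simp only [h, sum_add_distrib, sum_ite_eq, mem_univ, if_true, add_assoc]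

theorem mapDomain_swap_of_eq [DecidableEq σ] {e : σ →₀ ℕ} {i j : σ} (h : e i = e j) :
    e.mapDomain (Equiv.swap i j) = e := by
  ext l
  rw [Finsupp.mapDomain_equiv_apply, Equiv.symm_swap, Equiv.swap_apply_def]
  split_ifs with hi hj
  · rw [hi, h]
  · rw [hj, h]
  · rfl

variable [Fintype σ] {M : ℕ} {e : σ →₀ ℕ}

theorem dysonCoeff_monomial_const (h : ∀ l, e l = M) :
    dysonCoeff M (monomial e 1) = dysonCoeff 0 (1 : MvPolynomial σ ℚ) := by
  have he : e = constExponent σ M := Finsupp.ext h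
  funext k
  rw [← dysonCoeff_add 0 M 1 k, he, zero_add, mul_one]

theorem exists_lt_of_sum_eq (hsum : ∑ l, e l = Fintype.card σ * M)
    (h : ∃ l, e l ≠ M) : ∃ i, M < e i ∧ ∀ j, e j ≤ e i := by
  obtain ⟨l₀, hl₀⟩ := h
  obtain ⟨i, -, hmax⟩ := exists_max_image univ e ⟨l₀, mem_univ l₀⟩
  refine ⟨i, not_le.1 fun hle => hl₀ ?_, fun j => hmax j (mem_univ j)⟩
  refine (sum_eq_sum_iff_of_le fun l hl => (hmax l hl).trans hle).1 ?_ l₀ (mem_univ l₀)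
  rw [hsum, sum_const, card_univ, smul_eq_mul]

section

variable [DecidableEq σ] {i j : σ}

theorem pairCoeff_monomial_eq_zero (hij : i ≠ j) (h : e i = e j) (k : ℕ) :
    pairCoeff M i j (monomial e 1) k = 0 := by
  have hswap := pairCoeff_rename_swap M hij (monomial e 1) k
  rw [rename_monomial, mapDomain_swap_of_eq h] at hswap
  exact self_eq_neg.1 hswap

theorem pairCoeff_monomial_add_single (hij : i ≠ j) (u : σ →₀ ℕ) (k : ℕ) :
    pairCoeff M i j (monomial (u + Finsupp.single i 1) 1) k =
      pairCoeff M i j (monomial (u + Finsupp.single j 1) 1) k +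
        dysonCoeff M (monomial (u + Finsupp.single i 1) 1) (k + 1) +
          dysonCoeff M (monomial (u + Finsupp.single j 1) 1) (k + 1) := by
  have h := pairCoeff_X_mul_sub M hij (monomial u 1) k
  simp only [X, monomial_mul, one_mul] at h
  rw [add_comm u, add_comm u]
  linear_combination h

theorem pairCoeff_monomial_add_single_of_eq (hij : i ≠ j) {u : σ →₀ ℕ} (h : u i = u j) (k : ℕ) :
    pairCoeff M i j (monomial (u + Finsupp.single i 1) 1) k =
      dysonCoeff M (monomial (u + Finsupp.single i 1) 1) (k + 1) := by
  have hren : rename (Equiv.swap i j) (monomial (u + Finsupp.single i 1) (1 : ℚ)) =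
      monomial (u + Finsupp.single j 1) 1 := by
    rw [rename_monomial, Finsupp.mapDomain_add, mapDomain_swap_of_eq h, Finsupp.mapDomain_single,
      Equiv.swap_apply_left]
  have hp := pairCoeff_rename_swap M hij (monomial (u + Finsupp.single i 1) 1) k
  have hd := dysonCoeff_rename (Equiv.swap i j) M (monomial (u + Finsupp.single i 1) 1) (k + 1)
  rw [hren] at hp hd
  linear_combination (pairCoeff_monomial_add_single hij u k + hp + hd) / 2

-- Moving a unit of exponent from `X_i` to `X_j` lowers `∑ l, e l ^ 2` as long as `e i - e j ≥ 2`.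
theorem exists_pairCoeff_monomial_eq {V : AddSubgroup (ℕ → ℚ)} (hij : i ≠ j) (hle : e j ≤ e i)
    (hV : ∀ e' : σ →₀ ℕ, ∑ l, e' l ^ 2 < ∑ l, e l ^ 2 → dysonCoeff M (monomial e' 1) ∈ V) :
    ∃ g ∈ V, ∀ k, pairCoeff M i j (monomial e 1) k =
      (if e j < e i then dysonCoeff M (monomial e 1) (k + 1) else 0) + g (k + 1) := by
  induction hs : ∑ l, e l ^ 2 using Nat.strong_induction_on generalizing e with
  | _ s ih =>
    rcases hle.eq_or_lt with heq | hlt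
    · refine ⟨0, V.zero_mem, fun k => ?_⟩
      rw [pairCoeff_monomial_eq_zero hij heq.symm, if_neg heq.not_lt, Pi.zero_apply, add_zero]
    obtain ⟨u, rfl⟩ : ∃ u, e = u + Finsupp.single i 1 :=
      ⟨e - Finsupp.single i 1, (tsub_add_cancel_of_le
        (Finsupp.single_le_iff.2 (Nat.one_le_of_lt hlt))).symm⟩
    have hui : (u + Finsupp.single i 1 : σ →₀ ℕ) i = u i + 1 := by simp
    have huj : (u + Finsupp.single i 1 : σ →₀ ℕ) j = u j := by simp [hij.symm]
    have hui' : (u + Finsupp.single j 1 : σ →₀ ℕ) i = u i := by simp [hij]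
    have huj' : (u + Finsupp.single j 1 : σ →₀ ℕ) j = u j + 1 := by simp
    simp only [if_pos hlt]
    rw [hui, huj, Nat.lt_add_one_iff] at hlt
    rcases hlt.eq_or_lt with heq | hlt
    · refine ⟨0, V.zero_mem, fun k => ?_⟩
      rw [pairCoeff_monomial_add_single_of_eq hij heq.symm, Pi.zero_apply, add_zero]
    have hlt_sq : ∑ l, (u + Finsupp.single j 1 : σ →₀ ℕ) l ^ 2 <
        ∑ l, (u + Finsupp.single i 1 : σ →₀ ℕ) l ^ 2 := by
      rw [sum_add_single_one_sq, sum_add_single_one_sq]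
      lia
    obtain ⟨g, hg, hpair⟩ := ih _ (hs ▸ hlt_sq) (by rw [hui', huj']; exact hlt)
      (fun e' he' => hV e' (he'.trans hlt_sq)) rfl
    have hE := hV _ hlt_sq
    rw [hui', huj'] at hpair
    refine ⟨(if u j + 1 < u i then dysonCoeff M (monomial (u + Finsupp.single j 1) 1) else 0) +
      g + dysonCoeff M (monomial (u + Finsupp.single j 1) 1),
      add_mem (add_mem (by split_ifs; exacts [hE, V.zero_mem]) hg) hE, fun k => ?_⟩
    rw [pairCoeff_monomial_add_single hij, hpair]
    split_ifs <;> simp only [Pi.add_apply, Pi.zero_apply] <;> ring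

theorem mul_dysonCoeff_monomial_eq {g : σ → ℕ → ℚ}
    (hg : ∀ j ∈ univ.erase i, ∀ k, pairCoeff M i j (monomial e 1) k =
      (if e j < e i then dysonCoeff M (monomial e 1) (k + 1) else 0) + g j (k + 1)) (k : ℕ) :
    ((e i - M : ℚ) + k * #{j ∈ univ.erase i | e j < e i}) * dysonCoeff M (monomial e 1) k =
      -k * ∑ j ∈ univ.erase i, g j k := by
  cases k with
  | zero => linear_combination dysonCoeff_monomial_zero M e i
  | succ k =>
    have h := dysonCoeff_monomial_succ M e k i
    rw [sum_congr rfl fun j hj => hg j hj k, sum_add_distrib, ← sum_filter, sum_const,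
      nsmul_eq_mul] at h
    push_cast
    linear_combination h

end

theorem dysonCoeff_monomial_mem_span (M : ℕ) (e : σ →₀ ℕ) :
    dysonCoeff M (monomial e 1) ∈
      Submodule.span rationalSeq {dysonCoeff 0 (1 : MvPolynomial σ ℚ)} := by
  classical
  set V := Submodule.span rationalSeq {dysonCoeff 0 (1 : MvPolynomial σ ℚ)}
  induction hs : ∑ l, e l ^ 2 using Nat.strong_induction_on generalizing e with
  | _ s ih =>
    by_cases hsum : ∑ l, e l = Fintype.card σ * M
    swap
    · rw [show dysonCoeff M (monomial e 1) = 0 from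
        funext fun k => dysonCoeff_monomial_eq_zero hsum k]
      exact V.zero_mem
    by_cases hconst : ∀ l, e l = M
    · exact dysonCoeff_monomial_const hconst ▸ Submodule.mem_span_singleton_self _
    obtain ⟨i, hi, hmax⟩ := exists_lt_of_sum_eq hsum (not_forall.1 hconst)
    choose! g hgV hg using fun j (hj : j ∈ univ.erase i) =>
      exists_pairCoeff_monomial_eq (V := V.toAddSubgroup) (ne_of_mem_erase hj).symm (hmax j)
        fun e' he' => ih _ (hs ▸ he') e' rfl
    set m := #{j ∈ univ.erase i | e j < e i} with hm
    have hei : (0 : ℚ) < e i - M := sub_pos.2 (Nat.cast_lt.2 hi)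
    refine mem_of_rationalSeq_mul_mem (r := fun k => (e i - M : ℚ) + k * m) ?_
      (fun k => (add_pos_of_pos_of_nonneg hei (by positivity)).ne') ?_
    · convert polynomial_eval_mem_rationalSeq
        (Polynomial.C (e i - M : ℚ) + Polynomial.X * Polynomial.C (m : ℚ)) using 2
      simp
    · convert V.smul_mem ⟨_, polynomial_eval_mem_rationalSeq (-Polynomial.X)⟩ (V.sum_mem hgV)
      simp only [Subalgebra.smul_def]
      funext k
      simpa [hm] using mul_dysonCoeff_monomial_eq hg k

theorem dysonCoeff_mem_span (M : ℕ) (Q : MvPolynomial σ ℚ) :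
    dysonCoeff M Q ∈ Submodule.span rationalSeq {dysonCoeff 0 (1 : MvPolynomial σ ℚ)} := by
  classical
  induction Q using MvPolynomial.induction_on' with
  | monomial e c =>
    have h : dysonCoeff M (monomial e c) = algebraMap ℚ rationalSeq c •
        dysonCoeff M (monomial e 1) := by
      funext k
      rw [algebraMap_smul, Pi.smul_apply, dysonCoeff, dysonCoeff, ← coeff_smul, ← smul_mul_assoc,
        smul_monomial, smul_eq_mul, mul_one]
    exact h ▸ Submodule.smul_mem _ _ (dysonCoeff_monomial_mem_span M e)
  | add P Q hP hQ =>
    have h : dysonCoeff M (P + Q) = dysonCoeff M P + dysonCoeff M Q := by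
      funext k
      rw [Pi.add_apply, dysonCoeff, dysonCoeff, dysonCoeff, add_mul, coeff_add]
    exact h ▸ add_mem hP hQ

end DysonRationality

section ForresterRationality

theorem constantTerm_blockExponent_eq_dysonCoeff {σ : Type*} [Fintype σ] [DecidableEq σ]
    (B : Finset σ) (k a b : ℕ) :
    constantTerm (blockExponent B k) a b = dysonCoeff (b + (#B - 1))
      (monomial (Finsupp.equivFunOnFinite.symm fun l => if l ∈ B then 0 else #B - 1) 1 *
        ((∏ p ∈ B.offDiag, (X p.1 - X p.2)) * ∏ l, ((1 - X l) ^ a * (X l - 1) ^ b))) k := by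
  have h : constExponent σ (b + (#B - 1) + (Fintype.card σ - 1) * k) =
      (Finsupp.equivFunOnFinite.symm fun l => if l ∈ B then 0 else #B - 1) +
        centralExponent (blockExponent B k) b := by
    ext l
    rw [Finsupp.add_apply, centralExponent_apply, sum_erase_blockExponent, constExponent_apply,
      Finsupp.equivFunOnFinite_symm_apply_apply]
    split_ifs <;> ring
  rw [dysonCoeff, h, mul_assoc (monomial _ _), coeff_monomial_mul, one_mul, constantTerm, diffProd,
    prod_offDiag_pow_blockExponent B k fun p => (X p.1 - X p.2 : MvPolynomial σ ℚ),
    prod_pow, ← vandermondeSq, mul_right_comm]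

theorem forresterCT_zero_right_eq_dysonCoeff (n : ℕ) :
    forresterCT n 0 0 0 = dysonCoeff 0 (1 : MvPolynomial (Fin n) ℚ) := by
  funext k
  rw [forresterCT_eq_constantTerm, constantTerm_blockExponent_eq_dysonCoeff, add_zero,
    finalBlock_self]
  have h0 : (Finsupp.equivFunOnFinite.symm fun _ : Fin n => (0 : ℕ)) = 0 :=
    Finsupp.ext fun _ => rfl
  simp [h0]

theorem forresterCT_mem_span (n₀ n₁ a b : ℕ) :
    forresterCT n₀ n₁ a b ∈ Submodule.span rationalSeq {forresterRHS (n₀ + n₁) 0 0 0} := by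
  have h := funext (forresterCT_zero_right_eq_forresterRHS (n₀ + n₁))
  have hCT : forresterCT n₀ n₁ a b = dysonCoeff _ _ := funext fun k => by
    rw [forresterCT_eq_constantTerm, constantTerm_blockExponent_eq_dysonCoeff]
  rw [hCT, ← h, forresterCT_zero_right_eq_dysonCoeff]
  exact dysonCoeff_mem_span _ _

/-- The sequence `k ↦ (c k + u)! / (c k)!`, a polynomial in `k`. -/
def factorialRatio (c u k : ℕ) : ℚ := (k * c + u).factorial / (k * c).factorial

theorem factorialRatio_mem_rationalSeq (c u : ℕ) : factorialRatio c u ∈ rationalSeq := by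
  convert polynomial_eval_mem_rationalSeq
    ((ascPochhammer ℚ u).comp (Polynomial.X * Polynomial.C (c : ℚ) + 1)) using 1
  funext k
  rw [factorialRatio, ← Nat.factorial_mul_ascFactorial, Nat.cast_mul,
    mul_div_cancel_left₀ _ (Nat.cast_ne_zero.2 (Nat.factorial_ne_zero _)),
    ← ascPochhammer_nat_eq_natCast_ascFactorial]
  simp

theorem inv_factorialRatio_mem_rationalSeq (c u : ℕ) : (factorialRatio c u)⁻¹ ∈ rationalSeq :=
  inv_mem_rationalSeq (factorialRatio_mem_rationalSeq c u) fun k => by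
    rw [factorialRatio]
    positivity

theorem forresterRHS_eq_factorialRatio_mul (n₀ n₁ a b : ℕ) :
    forresterRHS n₀ n₁ a b =
      (∏ l ∈ range n₀, factorialRatio l (a + b) * (factorialRatio l a)⁻¹ *
          (factorialRatio l b)⁻¹) *
        (∏ j ∈ range n₁, ((j + 1 : ℕ) : ℕ → ℚ) * factorialRatio (n₀ + j + 1) j *
          factorialRatio (n₀ + j) (j + a + b) * (factorialRatio (n₀ + j) (j + a))⁻¹ *
            (factorialRatio (n₀ + j) (j + b))⁻¹) *
          forresterRHS (n₀ + n₁) 0 0 0 := by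
  funext k
  simp only [forresterRHS, prod_range_zero, mul_one, prod_range_add, Pi.mul_apply,
    Finset.prod_apply, Pi.inv_apply, factorialRatio]
  rw [mul_mul_mul_comm, ← prod_mul_distrib, ← prod_mul_distrib]
  congr 1 <;> refine prod_congr rfl fun l _ => ?_
  · simp only [add_zero, add_comm _ (k * l)]
    field_simp
  · have e1 : (k + 1) * l + a + b + k * n₀ = k * (n₀ + l) + (l + a + b) := by ring
    have e2 : (k + 1) * l + a + k * n₀ = k * (n₀ + l) + (l + a) := by ring
    have e3 : (k + 1) * l + b + k * n₀ = k * (n₀ + l) + (l + b) := by ring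
    have e4 : k * l + k + l + k * n₀ = k * (n₀ + l + 1) + l := by ring
    rw [e1, e2, e3, e4, zero_add, zero_add, Pi.natCast_apply]
    push_cast
    field_simp

theorem forresterRHS_mem_span (n₀ n₁ a b : ℕ) :
    forresterRHS n₀ n₁ a b ∈ Submodule.span rationalSeq {forresterRHS (n₀ + n₁) 0 0 0} := by
  refine Submodule.mem_span_singleton.2
    ⟨⟨_, ?_⟩, (forresterRHS_eq_factorialRatio_mul n₀ n₁ a b).symm⟩
  exact mul_mem
    (prod_mem fun l _ => mul_mem (mul_mem (factorialRatio_mem_rationalSeq _ _)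
      (inv_factorialRatio_mem_rationalSeq _ _)) (inv_factorialRatio_mem_rationalSeq _ _))
    (prod_mem fun j _ => mul_mem (mul_mem (mul_mem (mul_mem (natCast_mem _ _)
      (factorialRatio_mem_rationalSeq _ _)) (factorialRatio_mem_rationalSeq _ _))
        (inv_factorialRatio_mem_rationalSeq _ _)) (inv_factorialRatio_mem_rationalSeq _ _))

theorem forresterRHS_ne_zero (n₀ n₁ a b k : ℕ) : forresterRHS n₀ n₁ a b k ≠ 0 := by
  refine mul_ne_zero (prod_ne_zero_iff.2 fun l _ => ?_) (prod_ne_zero_iff.2 fun l _ => ?_) <;>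
    positivity

end ForresterRationality

end Forrester

open Forrester in
theorem forrester_n_le_five_general (n₀ n₁ a b k : ℕ) (h : n₀ ≤ 1 ∨ n₁ ≤ 2 ∨ n₀ = 2 ∧ n₁ = 3) :
    forresterCT n₀ n₁ a b k = forresterRHS n₀ n₁ a b k := by
  obtain ⟨f, hf⟩ := Submodule.mem_span_singleton.1 (forresterCT_mem_span n₀ n₁ a b)
  obtain ⟨g, hg⟩ := Submodule.mem_span_singleton.1 (forresterRHS_mem_span n₀ n₁ a b)
  suffices hfg : f = g by rw [← hf, ← hg, hfg]
  refine Subtype.ext (eq_of_mem_rationalSeq f.2 g.2 ?_)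
  filter_upwards [Filter.eventually_ge_atTop b] with k hb
  apply mul_right_cancel₀ (forresterRHS_ne_zero (n₀ + n₁) 0 0 0 k)
  calc f.1 k * forresterRHS (n₀ + n₁) 0 0 0 k
    _ = forresterCT n₀ n₁ a b k := congrFun hf k
    _ = forresterRHS n₀ n₁ a b k :=
      forresterCT_eq_forresterRHS_of_eq h hb (forresterCT_zero_zero_eq_forresterRHS h k) a
    _ = g.1 k * forresterRHS (n₀ + n₁) 0 0 0 k := (congrFun hg k).symm

/-- **Forrester's conjecture for `n ≤ 5`** (Proposition 5.4). -/
theorem forrester_n_le_five (n₀ n₁ a b k : ℕ) (hn : n₀ + n₁ ≤ 5) :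
    forresterCT n₀ n₁ a b k = forresterRHS n₀ n₁ a b k :=
  forrester_n_le_five_general n₀ n₁ a b k (by lia)
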